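/- arXiv:1112.0165 — 3 statements merged into one kernel-verified Lean document; each statement's English description precedes it below -/
import Mathlib

section
/- For every element u of the quotient group B_n/⟨Δ²⟩, the word length ‖u‖ of u with respect to the images of the simple elements satisfies ‖u‖ ≤ (n(n−1)/2) · |u|_{G_n}, where |u|_{G_n} is the word length of u, viewed as an element of the mapping class group MCG(S_{n+1}) of the (n+1)-times punctured sphere, with respect to the generating set G_n consisting of the images of the simple elements together with the rotation ρ. -/
namespace Braids

/-- The braid relations on `n` strands (Artin generators `σ_i`, `i : Fin (n-1)`):
`σ_i σ_j σ_i = σ_j σ_i σ_j` for `|i-j| = 1` and `σ_i σ_j = σ_j σ_i` for `|i-j| ≥ 2`. -/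
def braidRels (n : ℕ) : Set (FreeGroup (Fin (n - 1))) :=
  {r | (∃ i j : Fin (n - 1), (i : ℕ) + 1 = (j : ℕ) ∧
          r = .of i * .of j * .of i * (.of j * .of i * .of j)⁻¹) ∨
       (∃ i j : Fin (n - 1), (i : ℕ) + 2 ≤ (j : ℕ) ∧
          r = .of i * .of j * (.of j * .of i)⁻¹)}

/-- The braid group on `n` strands. -/
abbrev Braid (n : ℕ) := PresentedGroup (braidRels n)

/-- The Artin generator `σ_i` of the braid group on `n` strands. -/
def σ {n : ℕ} (i : Fin (n - 1)) : Braid n := PresentedGroup.of i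

/-- The Artin generator, with out-of-range indices mapped to `1`. -/
def σ' (n : ℕ) (i : ℕ) : Braid n := if h : i < n - 1 then σ ⟨i, h⟩ else 1

/-- The monoid of positive braids. -/
def Pos (n : ℕ) : Submonoid (Braid n) := Submonoid.closure (Set.range (σ (n := n)))

/-- The prefix order: `x ≼ y` iff `x⁻¹ * y` is a positive braid. -/
def PrefixLE {n : ℕ} (x y : Braid n) : Prop := x⁻¹ * y ∈ Pos n

/-- The Garside half-twist `Δ = σ₁(σ₂σ₁)(σ₃σ₂σ₁)⋯(σ_{n-1}⋯σ₁)` (0-based indices). -/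
def Δ (n : ℕ) : Braid n :=
  ((((List.range (n - 1)).map fun k => (List.range (k + 1)).reverse).flatten).map (σ' n)).prod

/-- A braid is simple (a positive permutation braid) if it is a positive prefix of `Δ`. -/
def IsSimple {n : ℕ} (s : Braid n) : Prop := s ∈ Pos n ∧ PrefixLE s (Δ n)

/-- A letter of the alphabet consisting of simple elements and their inverses. -/
def SimpleOrInv {n : ℕ} (a : Braid n) : Prop := IsSimple a ∨ IsSimple a⁻¹

/-- `len x` is `|x|`: the minimal length of a word representing `x` whose letters are
simple elements and their inverses. -/
noncomputable def len {n : ℕ} (x : Braid n) : ℕ :=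
  sInf {k | ∃ l : List (Braid n), (∀ a ∈ l, SimpleOrInv a) ∧ l.prod = x ∧ l.length = k}

/-! ### The mapping class group of the punctured sphere -/

/-- The free-group generator of index `k` (1-based out of `m-1` generators; out-of-range
indices map to `1`). -/
def fgen (m : ℕ) (k : ℕ) : FreeGroup (Fin (m - 1)) := if h : k < m - 1 then .of ⟨k, h⟩ else 1

/-- The word `σ₁ σ₂ ⋯ σ_{m-1}`. -/
def fullRow (m : ℕ) : FreeGroup (Fin (m - 1)) := ((List.range (m - 1)).map (fgen m)).prod

/-- The word `σ_{m-1} ⋯ σ₂ σ₁`. -/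
def fullRowRev (m : ℕ) : FreeGroup (Fin (m - 1)) :=
  ((List.range (m - 1)).reverse.map (fgen m)).prod

/-- Relations of the mapping class group of the `m`-times punctured sphere (Birman):
the braid relations together with `σ₁⋯σ_{m-1}σ_{m-1}⋯σ₁ = 1` and `(σ₁⋯σ_{m-1})^m = 1`. -/
def sphereRels (m : ℕ) : Set (FreeGroup (Fin (m - 1))) :=
  braidRels m ∪ {fullRow m * fullRowRev m, fullRow m ^ m}

/-- The mapping class group `MCG(S_m)` of the `m`-times punctured sphere. -/
abbrev SphereMCG (m : ℕ) := PresentedGroup (sphereRels m)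

/-- The half-twist generator `σ̂_k` of `MCG(S_m)`, `1 ≤ k ≤ m-1` (1-based; out-of-range
indices map to `1`). -/
def shat (m : ℕ) (k : ℕ) : SphereMCG m :=
  if h : 1 ≤ k ∧ k ≤ m - 1 then PresentedGroup.of ⟨k - 1, by omega⟩ else 1

/-- The rotation `ρ` of the `m`-times punctured sphere by the angle `2π/m`, which permutes
the `m` punctures cyclically; it equals `σ̂₁ σ̂₂ ⋯ σ̂_{m-1}`. -/
def ρSph (m : ℕ) : SphereMCG m := PresentedGroup.mk (sphereRels m) (fullRow m)

/-- The inclusion of generator indices of `B_n` into those of `MCG(S_{n+1})`. -/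
def embIdx (n : ℕ) (i : Fin (n - 1)) : Fin (n + 1 - 1) := ⟨i.1, by have := i.2; omega⟩

/-- The canonical homomorphism `B_n → MCG(S_{n+1})`, sending the Artin generator `σ_i` to the
half-twist `σ̂_i`; it is obtained by collapsing the boundary of the `n`-times punctured disk
to the `(n+1)`-st puncture of the sphere.  Its kernel is `⟨Δ²⟩`, so it identifies
`B_n/⟨Δ²⟩` with the subgroup of `MCG(S_{n+1})` of classes fixing the `(n+1)`-st puncture. -/
def brToSph (n : ℕ) : Braid n →* SphereMCG (n + 1) :=
  PresentedGroup.toGroup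
    (f := fun i => (PresentedGroup.of (embIdx n i) : SphereMCG (n + 1)))
    (by
      have key : ∀ r ∈ sphereRels (n + 1), PresentedGroup.mk (sphereRels (n + 1)) r = 1 :=
        fun r hr => (QuotientGroup.eq_one_iff r).2 (Subgroup.subset_normalClosure hr)
      have hcomp :
          FreeGroup.lift (fun i => (PresentedGroup.of (embIdx n i) : SphereMCG (n + 1))) =
            (PresentedGroup.mk (sphereRels (n + 1))).comp (FreeGroup.map (embIdx n)) := by
        apply FreeGroup.ext_hom
        intro a
        simp [PresentedGroup.of]
      intro r hr
      rw [hcomp, MonoidHom.comp_apply]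
      rcases hr with ⟨i, j, hij, rfl⟩ | ⟨i, j, hij, rfl⟩
      · have hmap : (FreeGroup.map (embIdx n))
            (.of i * .of j * .of i * (.of j * .of i * .of j)⁻¹) =
            (.of (embIdx n i) * .of (embIdx n j) * .of (embIdx n i) *
              (.of (embIdx n j) * .of (embIdx n i) * .of (embIdx n j))⁻¹) := by
          simp
        rw [hmap]
        exact key _ (Set.mem_union_left _
          (Or.inl ⟨embIdx n i, embIdx n j, by simpa [embIdx] using hij, rfl⟩))
      · have hmap : (FreeGroup.map (embIdx n))
            (.of i * .of j * (.of j * .of i)⁻¹) =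
            (.of (embIdx n i) * .of (embIdx n j) *
              (.of (embIdx n j) * .of (embIdx n i))⁻¹) := by
          simp
        rw [hmap]
        exact key _ (Set.mem_union_left _
          (Or.inr ⟨embIdx n i, embIdx n j, by simpa [embIdx] using hij, rfl⟩)))

/-- The images in `MCG(S_{n+1})` of the simple elements of `B_n`; these generate the image
of `B_n/⟨Δ²⟩`, and together with the rotation `ρ` they generate `MCG(S_{n+1})`. -/
def SimpleImg (n : ℕ) : Set (SphereMCG (n + 1)) :=
  {u | ∃ s : Braid n, IsSimple s ∧ u = brToSph n s}

/-- `‖u‖` : the word length of `u ∈ B_n/⟨Δ²⟩` (viewed inside `MCG(S_{n+1})`) with respect to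
the images of the simple elements and their inverses. -/
noncomputable def normLen (n : ℕ) (u : SphereMCG (n + 1)) : ℕ :=
  sInf {k | ∃ l : List (SphereMCG (n + 1)),
    (∀ a ∈ l, a ∈ SimpleImg n ∨ a⁻¹ ∈ SimpleImg n) ∧ l.prod = u ∧ l.length = k}

/-- `|u|_{G_n}` : the word length of `u ∈ MCG(S_{n+1})` with respect to the generating set
`G_n` consisting of the images of the simple elements together with the rotation `ρ`
(and inverses). -/
noncomputable def gnLen (n : ℕ) (u : SphereMCG (n + 1)) : ℕ :=
  sInf {k | ∃ l : List (SphereMCG (n + 1)),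
    (∀ a ∈ l, a ∈ SimpleImg n ∨ a⁻¹ ∈ SimpleImg n ∨ a = ρSph (n + 1) ∨ a = (ρSph (n + 1))⁻¹) ∧
      l.prod = u ∧ l.length = k}

/-! ### Generic braid computations -/

structure IsBr {G : Type*} [Group G] (s : ℕ → G) (m : ℕ) : Prop where
  braid : ∀ i, i + 1 < m → s i * s (i + 1) * s i = s (i + 1) * s i * s (i + 1)
  comm : ∀ i j, i + 2 ≤ j → j < m → s i * s j = s j * s i

section Generic
variable {G : Type*} [Group G]

def Bw (s : ℕ → G) (k : ℕ) : G := ((List.range k).map s).prod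
def Aw (s : ℕ → G) (k : ℕ) : G := ((List.range k).reverse.map s).prod
def Dw (s : ℕ → G) (k : ℕ) : G :=
  ((((List.range k).map fun k => (List.range (k + 1)).reverse).flatten).map s).prod

theorem Bw_zero (s : ℕ → G) : Bw s 0 = 1 := by simp [Bw]
theorem Aw_zero (s : ℕ → G) : Aw s 0 = 1 := by simp [Aw]
theorem Dw_zero (s : ℕ → G) : Dw s 0 = 1 := by simp [Dw]
theorem Bw_succ (s : ℕ → G) (k : ℕ) : Bw s (k + 1) = Bw s k * s k := by
  simp [Bw, List.range_succ]
theorem Aw_succ (s : ℕ → G) (k : ℕ) : Aw s (k + 1) = s k * Aw s k := by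
  simp [Aw, List.range_succ]
theorem Dw_succ (s : ℕ → G) (k : ℕ) : Dw s (k + 1) = Dw s k * Aw s (k + 1) := by
  unfold Dw
  rw [List.range_succ (n := k)]
  simp only [List.map_append, List.flatten_append, List.prod_append, List.map_cons, List.map_nil,
    List.flatten_cons, List.flatten_nil, List.append_nil]
  rfl

variable {s : ℕ → G} {m : ℕ}

theorem comm_Bw (h : IsBr s m) (i k : ℕ) (hk : k + 1 ≤ i) (hi : i < m) :
    s i * Bw s k = Bw s k * s i := by
  induction k with
  | zero => simp [Bw_zero]
  | succ k ih =>
    rw [Bw_succ, ← mul_assoc, ih (by omega), mul_assoc, mul_assoc, h.comm k i (by omega) hi]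

theorem comm_Aw (h : IsBr s m) (i k : ℕ) (hk : k + 1 ≤ i) (hi : i < m) :
    s i * Aw s k = Aw s k * s i := by
  induction k with
  | zero => simp [Aw_zero]
  | succ k ih =>
    rw [Aw_succ, ← mul_assoc, ← h.comm k i (by omega) hi, mul_assoc, ih (by omega), mul_assoc]

theorem comm_Dw (h : IsBr s m) (i k : ℕ) (hk : k + 1 ≤ i) (hi : i < m) :
    s i * Dw s k = Dw s k * s i := by
  induction k with
  | zero => simp [Dw_zero]
  | succ k ih =>
    rw [Dw_succ, ← mul_assoc, ih (by omega), mul_assoc, comm_Aw h i (k + 1) (by omega) hi,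
      mul_assoc]

theorem Bw_shift (h : IsBr s m) (i k : ℕ) (hi : i + 1 < k) (hk : k ≤ m) :
    Bw s k * s i = s (i + 1) * Bw s k := by
  induction k with
  | zero => omega
  | succ k ih =>
    rcases Nat.lt_or_ge (i + 1) k with h1 | h1
    · rw [Bw_succ, mul_assoc, ← h.comm i k (by omega) (by omega), ← mul_assoc, ih h1 (by omega),
        mul_assoc]
    · obtain rfl : k = i + 1 := by omega
      rw [Bw_succ, Bw_succ]
      have := h.braid i (by omega)
      have c := comm_Bw h (i + 1) i le_rfl (by omega)
      calc Bw s i * s i * s (i + 1) * s i = Bw s i * (s i * s (i + 1) * s i) := by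
            simp only [mul_assoc]
        _ = (Bw s i * s (i + 1)) * s i * s (i + 1) := by rw [this]; simp only [mul_assoc]
        _ = _ := by rw [← c]; simp only [mul_assoc]

theorem Aw_shift (h : IsBr s m) (i k : ℕ) (hi : i + 1 < k) (hk : k ≤ m) :
    s i * Aw s k = Aw s k * s (i + 1) := by
  induction k with
  | zero => omega
  | succ k ih =>
    rcases Nat.lt_or_ge (i + 1) k with h1 | h1
    · rw [Aw_succ, ← mul_assoc, h.comm i k (by omega) (by omega), mul_assoc, ih h1 (by omega),
        mul_assoc]
    · obtain rfl : k = i + 1 := by omega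
      rw [Aw_succ, Aw_succ]
      have := h.braid i (by omega)
      have c := comm_Aw h (i + 1) i le_rfl (by omega)
      calc s i * (s (i + 1) * (s i * Aw s i)) = (s i * s (i + 1) * s i) * Aw s i := by
            simp only [mul_assoc]
        _ = s (i + 1) * s i * (s (i + 1) * Aw s i) := by rw [this]; simp only [mul_assoc]
        _ = _ := by rw [c]; simp only [mul_assoc]

theorem Dw_succ_left (h : IsBr s m) (k : ℕ) (hk : k < m) : Dw s (k + 1) = Bw s (k + 1) * Dw s k := by
  induction k with
  | zero => simp [Dw_succ, Dw_zero, Bw_succ, Bw_zero, Aw_succ, Aw_zero]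
  | succ k ih =>
    have c := comm_Dw h (k + 1) k le_rfl hk
    calc Dw s (k + 1 + 1) = Bw s (k + 1) * (Dw s k * s (k + 1)) * Aw s (k + 1) := by
          rw [Dw_succ, ih (by omega), Aw_succ]; simp only [mul_assoc]
      _ = _ := by rw [← c, Bw_succ s (k + 1), Dw_succ s k]; simp only [mul_assoc]

theorem Aw_Aw (h : IsBr s m) (k l : ℕ) (hk : k < l) (hl : l ≤ m) :
    Aw s k * Aw s l = Aw s l * Aw (fun i => s (i + 1)) k := by
  induction k with
  | zero => simp [Aw_zero]
  | succ k ih =>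
    rw [Aw_succ, Aw_succ, mul_assoc, ih (by omega), ← mul_assoc, Aw_shift h k l hk hl, mul_assoc]

theorem Dw_Aw (h : IsBr s m) (k l : ℕ) (hk : k < l) (hl : l ≤ m) :
    Dw s k * Aw s l = Aw s l * Dw (fun i => s (i + 1)) k := by
  induction k with
  | zero => simp [Dw_zero]
  | succ k ih =>
    rw [Dw_succ, Dw_succ, mul_assoc, Aw_Aw h _ l hk hl, ← mul_assoc, ih (by omega), mul_assoc]

theorem Bw_mem (P : Submonoid G) (hP : ∀ i, s i ∈ P) (k : ℕ) : Bw s k ∈ P := by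
  apply Submonoid.list_prod_mem; simp; intros; apply hP

theorem Aw_mem (P : Submonoid G) (hP : ∀ i, s i ∈ P) (k : ℕ) : Aw s k ∈ P := by
  apply Submonoid.list_prod_mem; simp; intros; apply hP

theorem Dw_mem (P : Submonoid G) (hP : ∀ i, s i ∈ P) (k : ℕ) : Dw s k ∈ P := by
  apply Submonoid.list_prod_mem
  intro x hx
  obtain ⟨i, -, rfl⟩ := List.mem_map.1 hx
  apply hP

theorem gen_prefix (h : IsBr s m) (P : Submonoid G) (hP : ∀ i, s i ∈ P) (i k : ℕ) (hi : i < k)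
    (hk : k ≤ m) : ∃ p ∈ P, Dw s k = s i * p := by
  induction k with
  | zero => omega
  | succ k ih =>
    rcases Nat.lt_or_ge i k with h1 | h1
    · obtain ⟨p, hp, e⟩ := ih h1 (by omega)
      exact ⟨p * Aw s (k + 1), P.mul_mem hp (Aw_mem P hP _), by rw [Dw_succ, e, mul_assoc]⟩
    · obtain rfl : i = k := by omega
      refine ⟨Aw s i * Dw (fun i => s (i + 1)) i,
        P.mul_mem (Aw_mem P hP _) (Dw_mem P (fun j => hP _) _), ?_⟩
      rw [Dw_succ, Dw_Aw h i (i + 1) (by omega) hk, Aw_succ, mul_assoc]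

theorem map_Bw {K : Type*} [Group K] (φ : G →* K) (t : ℕ → K) (k : ℕ)
    (ht : ∀ i < k, φ (s i) = t i) : φ (Bw s k) = Bw t k := by
  induction k with
  | zero => simp [Bw_zero]
  | succ k ih => rw [Bw_succ, Bw_succ, map_mul, ih (fun i hi => ht i (by omega)), ht k (by omega)]

theorem map_Aw {K : Type*} [Group K] (φ : G →* K) (t : ℕ → K) (k : ℕ)
    (ht : ∀ i < k, φ (s i) = t i) : φ (Aw s k) = Aw t k := by
  induction k with
  | zero => simp [Aw_zero]
  | succ k ih => rw [Aw_succ, Aw_succ, map_mul, ih (fun i hi => ht i (by omega)), ht k (by omega)]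

end Generic

/-! ### Simple elements of the braid group -/

theorem mk_eq {α : Type*} {rels : Set (FreeGroup α)} {x y : FreeGroup α} (h : x * y⁻¹ ∈ rels) :
    PresentedGroup.mk rels x = PresentedGroup.mk rels y := by
  have : PresentedGroup.mk rels (x * y⁻¹) = 1 :=
    (QuotientGroup.eq_one_iff _).2 (Subgroup.subset_normalClosure h)
  rwa [map_mul, map_inv, mul_inv_eq_one] at this

theorem isBr_mk (m : ℕ) (rels : Set (FreeGroup (Fin (m - 1)))) (hr : braidRels m ⊆ rels) :
    IsBr (fun i => PresentedGroup.mk rels (fgen m i)) (m - 1) := by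
  constructor
  · intro i hi
    simp only [← map_mul]
    apply mk_eq
    apply hr
    refine Or.inl ⟨⟨i, by omega⟩, ⟨i + 1, hi⟩, rfl, ?_⟩
    simp [fgen, hi, show i < m - 1 by omega]
  · intro i j hij hj
    simp only [← map_mul]
    apply mk_eq
    apply hr
    refine Or.inr ⟨⟨i, by omega⟩, ⟨j, hj⟩, hij, ?_⟩
    simp [fgen, hj, show i < m - 1 by omega]

theorem σ'_eq (n i : ℕ) : σ' n i = PresentedGroup.mk (braidRels n) (fgen n i) := by
  unfold σ' fgen σ PresentedGroup.of
  split_ifs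
  · rfl
  · simp

theorem isBr_σ' (n : ℕ) : IsBr (σ' n) (n - 1) := by
  have := isBr_mk n (braidRels n) le_rfl
  simpa only [← σ'_eq] using this

theorem σ'_pos (n i : ℕ) : σ' n i ∈ Pos n := by
  unfold σ'
  split_ifs
  · exact Submonoid.subset_closure ⟨_, rfl⟩
  · exact one_mem _

theorem Δ_eq (n : ℕ) : Δ n = Dw (σ' n) (n - 1) := rfl

theorem simple_of {n : ℕ} {x p : Braid n} (hx : x ∈ Pos n) (hp : p ∈ Pos n) (h : Δ n = x * p) :
    IsSimple x := ⟨hx, by rw [PrefixLE, h]; simpa using hp⟩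

theorem simple_σ' (n i : ℕ) (hi : i < n - 1) : IsSimple (σ' n i) := by
  obtain ⟨p, hp, e⟩ := gen_prefix (isBr_σ' n) (Pos n) (σ'_pos n) i (n - 1) hi le_rfl
  exact simple_of (σ'_pos n i) hp e

theorem simple_B (n : ℕ) (hn : 3 ≤ n) : IsSimple (Bw (σ' n) (n - 1)) := by
  obtain ⟨k, hk⟩ : ∃ k, n - 1 = k + 1 := ⟨n - 2, by omega⟩
  refine simple_of (p := Dw (σ' n) k) (Bw_mem _ (σ'_pos n) _) (Dw_mem _ (σ'_pos n) _) ?_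
  have := Dw_succ_left (isBr_σ' n) k (by omega)
  rw [← hk] at this
  exact this

theorem simple_A (n : ℕ) (hn : 3 ≤ n) : IsSimple (Aw (σ' n) (n - 1)) := by
  obtain ⟨k, hk⟩ : ∃ k, n - 1 = k + 1 := ⟨n - 2, by omega⟩
  refine simple_of (p := Dw (fun i => σ' n (i + 1)) k) (Aw_mem _ (σ'_pos n) _)
    (Dw_mem _ (fun i => σ'_pos n _) _) ?_
  have := Dw_Aw (isBr_σ' n) k (k + 1) (by omega) (by omega)
  rw [← Dw_succ, ← hk] at this
  exact this

/-- exponent sum -/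
def expo (n : ℕ) : Braid n →* Multiplicative ℤ :=
  PresentedGroup.toGroup (f := fun _ => Multiplicative.ofAdd 1) (by
    rintro r (⟨i, j, -, rfl⟩ | ⟨i, j, -, rfl⟩) <;> simp)

theorem expo_σ (n : ℕ) (i : Fin (n - 1)) : expo n (σ i) = Multiplicative.ofAdd 1 := by
  simp [expo, σ]

theorem expo_σ' (n i : ℕ) (hi : i < n - 1) : expo n (σ' n i) = Multiplicative.ofAdd 1 := by
  simp [σ', hi, expo_σ]

theorem expo_A (n k : ℕ) (hk : k ≤ n - 1) :
    expo n (Aw (σ' n) k) = Multiplicative.ofAdd (k : ℤ) := by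
  induction k with
  | zero => simp [Aw_zero]
  | succ k ih =>
    rw [Aw_succ, map_mul, ih (by omega), expo_σ' n k (by omega), ← ofAdd_add]
    congr 1; push_cast; ring

theorem expo_D (n k : ℕ) (hk : k ≤ n - 1) :
    expo n (Dw (σ' n) k) = Multiplicative.ofAdd (((k + 1) * k / 2 : ℕ) : ℤ) := by
  induction k with
  | zero => simp [Dw_zero]
  | succ k ih =>
    rw [Dw_succ, map_mul, ih (by omega), expo_A n (k + 1) hk, ← ofAdd_add]
    congr 1
    have : (k + 1 + 1) * (k + 1) = (k + 1) * k + (k + 1) * 2 := by ring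
    rw [this, Nat.add_mul_div_right _ _ (by norm_num)]
    push_cast; ring

theorem pos_word {n : ℕ} {x : Braid n} (hx : x ∈ Pos n) :
    ∃ l : List (Fin (n - 1)), (l.map σ).prod = x := by
  induction hx using Submonoid.closure_induction with
  | mem x hx => obtain ⟨i, rfl⟩ := hx; exact ⟨[i], by simp⟩
  | one => exact ⟨[], by simp⟩
  | mul x y _ _ h1 h2 =>
    obtain ⟨l, rfl⟩ := h1
    obtain ⟨l', rfl⟩ := h2
    exact ⟨l ++ l', by simp⟩

theorem expo_word {n : ℕ} (l : List (Fin (n - 1))) :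
    expo n (l.map σ).prod = Multiplicative.ofAdd (l.length : ℤ) := by
  induction l with
  | nil => simp
  | cons a l ih =>
    rw [List.map_cons, List.prod_cons, map_mul, ih, expo_σ, ← ofAdd_add]
    congr 1; simp; ring

theorem simple_word {n : ℕ} (hn : 3 ≤ n) {x : Braid n} (hx : IsSimple x) :
    ∃ l : List (Fin (n - 1)), (l.map σ).prod = x ∧ l.length ≤ n * (n - 1) / 2 := by
  obtain ⟨h1, h2⟩ := hx
  obtain ⟨l, rfl⟩ := pos_word h1
  obtain ⟨l', h'⟩ := pos_word h2
  refine ⟨l, rfl, ?_⟩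
  have e := expo_D n (n - 1) le_rfl
  rw [← Δ_eq, inv_mul_eq_iff_eq_mul.1 h'.symm, map_mul, expo_word, expo_word, ← ofAdd_add] at e
  have e' := Multiplicative.ofAdd.injective e
  rw [show n - 1 + 1 = n by omega] at e'
  omega

/-! ### Sphere -/

def sp (n i : ℕ) : SphereMCG (n + 1) := PresentedGroup.mk (sphereRels (n + 1)) (fgen (n + 1) i)

theorem isBr_sp (n : ℕ) : IsBr (sp n) n :=
  isBr_mk (n + 1) (sphereRels (n + 1)) Set.subset_union_left

theorem ρ_eq (n : ℕ) : ρSph (n + 1) = Bw (sp n) n := by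
  unfold ρSph fullRow Bw
  rw [map_list_prod, List.map_map]; rfl

theorem ρ_rev (n : ℕ) : ρSph (n + 1) * Aw (sp n) n = 1 := by
  have h : PresentedGroup.mk (sphereRels (n + 1)) (fullRow (n + 1) * fullRowRev (n + 1)) = 1 :=
    (QuotientGroup.eq_one_iff _).2 (Subgroup.subset_normalClosure (by right; left; rfl))
  rw [map_mul] at h
  rw [← h]
  unfold ρSph fullRowRev Aw
  rw [map_list_prod (PresentedGroup.mk (sphereRels (n + 1)))
    ((List.range (n + 1 - 1)).reverse.map _), List.map_map]
  rfl

theorem ρ_pow (n : ℕ) : ρSph (n + 1) ^ (n + 1) = 1 := by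
  have h : PresentedGroup.mk (sphereRels (n + 1)) (fullRow (n + 1) ^ (n + 1)) = 1 :=
    (QuotientGroup.eq_one_iff _).2 (Subgroup.subset_normalClosure (by right; right; rfl))
  rwa [map_pow] at h

theorem br_σ (n : ℕ) (i : Fin (n - 1)) : brToSph n (σ i) = sp n i := by
  have : (i : ℕ) < n := by omega
  have h : brToSph n (σ i) = PresentedGroup.of (embIdx n i) := by simp [brToSph, σ]
  rw [h]
  simp [sp, fgen, PresentedGroup.of, embIdx, this]

theorem br_σ' (n i : ℕ) (hi : i < n - 1) : brToSph n (σ' n i) = sp n i := by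
  simp [σ', hi, br_σ]

def Letter (n : ℕ) (a : SphereMCG (n + 1)) : Prop := a ∈ SimpleImg n ∨ a⁻¹ ∈ SimpleImg n

theorem Letter.inv {n : ℕ} {a : SphereMCG (n + 1)} (h : Letter n a) : Letter n a⁻¹ := by
  unfold Letter at *
  rw [inv_inv]; exact h.symm

theorem letter_sp (n i : ℕ) (hi : i < n - 1) : Letter n (sp n i) :=
  Or.inl ⟨_, simple_σ' n i hi, (br_σ' n i hi).symm⟩

theorem letter_B (n : ℕ) (hn : 3 ≤ n) : Letter n (Bw (sp n) (n - 1)) :=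
  Or.inl ⟨_, simple_B n hn, (map_Bw _ _ _ (fun i hi => br_σ' n i hi)).symm⟩

theorem letter_A (n : ℕ) (hn : 3 ≤ n) : Letter n (Aw (sp n) (n - 1)) :=
  Or.inl ⟨_, simple_A n hn, (map_Aw _ _ _ (fun i hi => br_σ' n i hi)).symm⟩

theorem sp_conj (n i : ℕ) (hi : i < n) :
    ρSph (n + 1) ^ i * sp n 0 * (ρSph (n + 1) ^ i)⁻¹ = sp n i := by
  induction i with
  | zero => simp
  | succ i ih =>
    have h := Bw_shift (isBr_sp n) i n hi le_rfl
    rw [← ρ_eq] at h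
    rw [pow_succ', mul_inv_rev]
    calc _ = ρSph (n + 1) * (ρSph (n + 1) ^ i * sp n 0 * (ρSph (n + 1) ^ i)⁻¹) *
          (ρSph (n + 1))⁻¹ := by simp only [mul_assoc]
      _ = _ := by rw [ih (by omega), h]; simp

/-- the key: all conjugates of `σ̂` by `ρ` are a letter times a power of `ρ`. -/
theorem conj_letter (n : ℕ) (hn : 3 ≤ n) (r : ℕ) :
    (∃ a j, Letter n a ∧
      ρSph (n + 1) ^ r * sp n 0 * (ρSph (n + 1) ^ r)⁻¹ = a * ρSph (n + 1) ^ j) ∧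
    (∃ a j, Letter n a ∧
      (ρSph (n + 1) ^ r * sp n 0 * (ρSph (n + 1) ^ r)⁻¹)⁻¹ = a * ρSph (n + 1) ^ j) := by
  have hpow : ρSph (n + 1) ^ r = ρSph (n + 1) ^ (r % (n + 1)) := by
    conv_lhs => rw [← Nat.mod_add_div r (n + 1), pow_add, pow_mul, ρ_pow, one_pow, mul_one]
  rw [hpow]
  have hr : r % (n + 1) < n + 1 := Nat.mod_lt _ (by omega)
  generalize r % (n + 1) = r at hr
  have hinv : (ρSph (n + 1))⁻¹ = ρSph (n + 1) ^ n := by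
    rw [inv_eq_iff_mul_eq_one, ← pow_succ', ρ_pow]
  obtain ⟨k, rfl⟩ : ∃ k, n = k + 1 := ⟨n - 1, by omega⟩
  have hB := letter_B (k + 1) hn
  have hA := letter_A (k + 1) hn
  have e1 : ρSph (k + 1 + 1) = Bw (sp (k + 1)) k * sp (k + 1) k := by rw [ρ_eq, Bw_succ]
  have e2 : ρSph (k + 1 + 1) * (sp (k + 1) k * Aw (sp (k + 1)) k) = 1 := by
    rw [← Aw_succ, ρ_rev]
  simp only [Nat.add_sub_cancel] at hA hB
  have f1 : sp (k + 1) k = (Bw (sp (k + 1)) k)⁻¹ * ρSph (k + 1 + 1) := by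
    rw [e1]; group
  have f2 : sp (k + 1) k = (ρSph (k + 1 + 1))⁻¹ * (Aw (sp (k + 1)) k)⁻¹ := by
    rw [← mul_assoc] at e2
    rw [← mul_eq_one_iff_eq_inv.1 e2]; group
  rcases Nat.lt_or_ge r k with h | h
  · rw [sp_conj (k + 1) r (by omega)]
    have hl := letter_sp (k + 1) r (by omega)
    exact ⟨⟨_, 0, hl, by simp⟩, ⟨_, 0, hl.inv, by simp⟩⟩
  · rcases Nat.lt_or_ge r (k + 1) with h' | h'
    · obtain rfl : r = k := by omega
      rw [sp_conj (r + 1) r (by omega)]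
      refine ⟨⟨_, 1, hB.inv, by simpa using f1⟩, ⟨_, 1, hA, ?_⟩⟩
      rw [f2]; simp
    · obtain rfl : r = k + 1 := by omega
      have : ρSph (k + 1 + 1) ^ (k + 1) * sp (k + 1) 0 * (ρSph (k + 1 + 1) ^ (k + 1))⁻¹ =
          ρSph (k + 1 + 1) * sp (k + 1) k * (ρSph (k + 1 + 1))⁻¹ := by
        rw [← sp_conj (k + 1) k (by omega), pow_succ']; group
      rw [this]
      refine ⟨⟨_, k + 1, hA.inv, ?_⟩, ⟨_, k + 1, hB, ?_⟩⟩
      · rw [← hinv, f2]; group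
      · rw [← hinv, f1]; group

/-- rewriting predicate -/
def R (n k : ℕ) (w : SphereMCG (n + 1)) : Prop :=
  ∀ j : ℕ, ∃ (L : List (SphereMCG (n + 1))) (j' : ℕ), (∀ a ∈ L, Letter n a) ∧
    ρSph (n + 1) ^ j * w = L.prod * ρSph (n + 1) ^ j' ∧ L.length ≤ k

theorem R_one (n : ℕ) : R n 0 1 := fun j => ⟨[], j, by simp, by simp, by simp⟩

theorem R_ρpow (n i : ℕ) : R n 0 (ρSph (n + 1) ^ i) :=
  fun j => ⟨[], j + i, by simp, by simp [pow_add], by simp⟩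

theorem R_mono {n k l : ℕ} {w : SphereMCG (n + 1)} (h : R n k w) (hkl : k ≤ l) : R n l w := by
  intro j
  obtain ⟨L, j', h1, h2, h3⟩ := h j
  exact ⟨L, j', h1, h2, h3.trans hkl⟩

theorem R_mul {n k l : ℕ} {w v : SphereMCG (n + 1)} (h : R n k w) (h' : R n l v) :
    R n (k + l) (w * v) := by
  intro j
  obtain ⟨L, j1, h1, h2, h3⟩ := h j
  obtain ⟨L', j2, h1', h2', h3'⟩ := h' j1
  refine ⟨L ++ L', j2, ?_, ?_, ?_⟩
  · intro a ha
    rcases List.mem_append.1 ha with ha | ha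
    · exact h1 a ha
    · exact h1' a ha
  · rw [← mul_assoc, h2, mul_assoc, h2', List.prod_append, mul_assoc]
  · rw [List.length_append]; omega

theorem R_sp (n : ℕ) (hn : 3 ≤ n) (i : ℕ) (hi : i < n) : R n 1 (sp n i) ∧ R n 1 (sp n i)⁻¹ := by
  constructor
  · intro j
    obtain ⟨a, j', ha, e⟩ := (conj_letter n hn (j + i)).1
    refine ⟨[a], j' + j, by simpa using ha, ?_, by simp⟩
    rw [List.prod_singleton, pow_add, ← mul_assoc, ← e, ← sp_conj n i hi, pow_add]; group
  · intro j
    obtain ⟨a, j', ha, e⟩ := (conj_letter n hn (j + i)).2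
    refine ⟨[a], j' + j, by simpa using ha, ?_, by simp⟩
    rw [List.prod_singleton, pow_add, ← mul_assoc, ← e, ← sp_conj n i hi, pow_add]; group

theorem R_word (n : ℕ) (hn : 3 ≤ n) (l : List (Fin (n - 1))) :
    R n l.length (brToSph n (l.map σ).prod) ∧ R n l.length (brToSph n (l.map σ).prod)⁻¹ := by
  induction l with
  | nil => simp [R_one]
  | cons a l ih =>
    have := R_sp n hn a (by omega)
    rw [List.map_cons, List.prod_cons, map_mul, mul_inv_rev, br_σ, List.length_cons]
    constructor
    · rw [add_comm]; exact R_mul this.1 ih.1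
    · exact R_mul ih.2 this.2

theorem R_gn (n : ℕ) (hn : 3 ≤ n) (l : List (SphereMCG (n + 1)))
    (hl : ∀ a ∈ l, a ∈ SimpleImg n ∨ a⁻¹ ∈ SimpleImg n ∨ a = ρSph (n + 1) ∨
      a = (ρSph (n + 1))⁻¹) : R n (n * (n - 1) / 2 * l.length) l.prod := by
  induction l with
  | nil => simpa using R_one n
  | cons a l ih =>
    rw [List.prod_cons, List.length_cons, mul_add, mul_one, add_comm]
    refine R_mul ?_ (ih fun b hb => hl b (List.mem_cons_of_mem _ hb))
    rcases hl a List.mem_cons_self with ⟨s, hs, e⟩ | ⟨s, hs, e⟩ | e | e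
    · obtain ⟨w, rfl, hw⟩ := simple_word hn hs
      rw [e]; exact R_mono (R_word n hn w).1 hw
    · obtain ⟨w, rfl, hw⟩ := simple_word hn hs
      rw [← inv_inv a, e]; exact R_mono (R_word n hn w).2 hw
    · rw [e, ← pow_one (ρSph (n + 1))]; exact R_mono (R_ρpow n 1) (Nat.zero_le _)
    · have hinv : (ρSph (n + 1))⁻¹ = ρSph (n + 1) ^ n := by
        rw [inv_eq_iff_mul_eq_one, ← pow_succ', ρ_pow]
      rw [e, hinv]; exact R_mono (R_ρpow n n) (Nat.zero_le _)

/-! ### Permutation action -/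

def sw (i : ℕ) : Equiv.Perm ℕ := Equiv.swap i (i + 1)

theorem Bsw (k x : ℕ) :
    Bw sw k x = if x < k then x + 1 else if x = k then 0 else x := by
  induction k generalizing x with
  | zero => simp [Bw_zero]
  | succ k ih =>
    rw [Bw_succ, Equiv.Perm.mul_apply, ih]
    simp only [sw, Equiv.swap_apply_def]
    split_ifs <;> omega

theorem Bsw_pow (n j x : ℕ) (hx : x ≤ n) : (Bw sw n ^ j) x = (x + j) % (n + 1) := by
  induction j with
  | zero => simp [Nat.mod_eq_of_lt (show x < n + 1 by omega)]
  | succ j ih =>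
    rw [pow_succ', Equiv.Perm.mul_apply, ih, Bsw]
    have := Nat.mod_lt (x + j) (show 0 < n + 1 by omega)
    rw [← add_assoc, ← Nat.mod_add_mod (x + j) (n + 1) 1]
    generalize (x + j) % (n + 1) = y at *
    split_ifs with h1 h2
    · rw [Nat.mod_eq_of_lt (by omega)]
    · rw [h2, Nat.mod_self]
    · omega

theorem Bsw_pow_self (n : ℕ) : Bw sw n ^ (n + 1) = 1 := by
  ext x
  rcases Nat.lt_or_ge n x with h | h
  · have : ∀ j, (Bw sw n ^ j) x = x := by
      intro j
      induction j with
      | zero => simp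
      | succ j ih =>
        rw [pow_succ', Equiv.Perm.mul_apply, ih, Bsw, if_neg (by omega), if_neg (by omega)]
    simp [this]
  · rw [Bsw_pow n _ x h]
    simp [Nat.mod_eq_of_lt (show x < n + 1 by omega)]

theorem BA_sw (k : ℕ) : Bw sw k * Aw sw k = 1 := by
  induction k with
  | zero => simp [Bw_zero, Aw_zero]
  | succ k ih =>
    rw [Bw_succ, Aw_succ, mul_assoc, ← mul_assoc (sw k)]
    simp [sw] at *; exact ih

theorem isBr_sw (m : ℕ) : IsBr sw m := by
  constructor
  · intro i _
    ext x
    simp only [sw, Equiv.Perm.mul_apply, Equiv.swap_apply_def]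
    split_ifs <;> omega
  · intro i j h _
    ext x
    simp only [sw, Equiv.Perm.mul_apply, Equiv.swap_apply_def]
    split_ifs <;> omega

theorem lift_fgen (m i : ℕ) (hi : i < m - 1) :
    FreeGroup.lift (fun i : Fin (m - 1) => sw i) (fgen m i) = sw i := by
  simp [fgen, hi]

theorem lift_row (m : ℕ) :
    FreeGroup.lift (fun i : Fin (m - 1) => sw i) (fullRow m) = Bw sw (m - 1) :=
  map_Bw (s := fgen m) _ _ _ (fun i hi => lift_fgen m i hi)

theorem lift_rowRev (m : ℕ) :
    FreeGroup.lift (fun i : Fin (m - 1) => sw i) (fullRowRev m) = Aw sw (m - 1) :=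
  map_Aw (s := fgen m) _ _ _ (fun i hi => lift_fgen m i hi)

def perm (n : ℕ) : SphereMCG (n + 1) →* Equiv.Perm ℕ :=
  PresentedGroup.toGroup (f := fun i : Fin (n + 1 - 1) => sw i) (by
    rintro r ((⟨i, j, h, rfl⟩ | ⟨i, j, h, rfl⟩) | h)
    · rw [map_mul, map_inv, mul_inv_eq_one]
      simpa [← h] using (isBr_sw (i + 2)).braid i (by omega)
    · rw [map_mul, map_inv, mul_inv_eq_one]
      simpa using (isBr_sw (j + 1)).comm i j h (by omega)
    · rcases h with rfl | h
      · rw [map_mul, lift_row, lift_rowRev, BA_sw]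
      · rw [Set.mem_singleton_iff.1 h, map_pow, lift_row]
        exact Bsw_pow_self n)

theorem perm_ρ (n : ℕ) : perm n (ρSph (n + 1)) = Bw sw n := lift_row (n + 1)

theorem perm_br (n : ℕ) (x : Braid n) : perm n (brToSph n x) n = n := by
  have hx : x ∈ Subgroup.closure (Set.range (PresentedGroup.of (rels := braidRels n))) := by
    rw [PresentedGroup.closure_range_of]; trivial
  induction hx using Subgroup.closure_induction with
  | mem x hx =>
    obtain ⟨i, rfl⟩ := hx
    have h : perm n (brToSph n (PresentedGroup.of i)) = sw i := by
      simp [brToSph, perm, embIdx]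
    rw [h, sw, Equiv.swap_apply_of_ne_of_ne] <;> omega
  | one => simp
  | mul x y _ _ h1 h2 => rw [map_mul, map_mul, Equiv.Perm.mul_apply, h2, h1]
  | inv x _ h => rw [map_inv, map_inv, Equiv.Perm.inv_eq_iff_eq, h]

theorem ρpow_eq_one (n j : ℕ) (h : ρSph (n + 1) ^ j ∈ (brToSph n).range) :
    ρSph (n + 1) ^ j = 1 := by
  obtain ⟨x, hx⟩ := h
  have := perm_br n x
  rw [hx, map_pow, perm_ρ, Bsw_pow n j n le_rfl] at this
  have h1 : (n + j + 1) % (n + 1) = 0 := by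
    rw [← Nat.mod_add_mod, this, Nat.mod_self]
  have h2 : j % (n + 1) = 0 := by
    rw [show n + j + 1 = j + (n + 1) by ring, Nat.add_mod_right] at h1; exact h1
  obtain ⟨c, rfl⟩ := Nat.dvd_of_mod_eq_zero h2
  rw [pow_mul, ρ_pow, one_pow]

theorem letter_range {n : ℕ} {a : SphereMCG (n + 1)} (h : Letter n a) :
    a ∈ (brToSph n).range := by
  rcases h with ⟨s, -, e⟩ | ⟨s, -, e⟩
  · exact ⟨s, e.symm⟩
  · exact ⟨s⁻¹, by rw [map_inv, ← e, inv_inv]⟩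

theorem gn_word (n : ℕ) (u : SphereMCG (n + 1)) (hu : u ∈ (brToSph n).range) :
    ∃ l : List (SphereMCG (n + 1)), (∀ a ∈ l, Letter n a) ∧ l.prod = u := by
  obtain ⟨x, rfl⟩ := hu
  have hx : x ∈ Subgroup.closure (Set.range (PresentedGroup.of (rels := braidRels n))) := by
    rw [PresentedGroup.closure_range_of]; trivial
  induction hx using Subgroup.closure_induction with
  | mem x hx =>
    obtain ⟨i, rfl⟩ := hx
    refine ⟨[sp n i], ?_, ?_⟩
    · simpa using letter_sp n i i.2
    · rw [List.prod_singleton, ← br_σ]; rfl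
  | one => exact ⟨[], by simp, by simp⟩
  | mul x y _ _ h1 h2 =>
    obtain ⟨l, hl, e⟩ := h1
    obtain ⟨l', hl', e'⟩ := h2
    refine ⟨l ++ l', ?_, by rw [List.prod_append, e, e', map_mul]⟩
    intro a ha
    rcases List.mem_append.1 ha with ha | ha
    · exact hl a ha
    · exact hl' a ha
  | inv x _ h =>
    obtain ⟨l, hl, e⟩ := h
    refine ⟨(l.map fun a => a⁻¹).reverse, ?_, by rw [map_inv, ← e, List.prod_inv_reverse]⟩
    intro a ha
    obtain ⟨b, hb, rfl⟩ := List.mem_map.1 (List.mem_reverse.1 ha)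
    exact (hl b hb).inv

/-- **Lemma.** For every `u ∈ B_n/⟨Δ²⟩` (identified with its image in `MCG(S_{n+1})`),
`‖u‖ ≤ (n(n-1)/2) · |u|_{G_n}`. -/
theorem normLen_le_gnLen (n : ℕ) (hn : 3 ≤ n) (u : SphereMCG (n + 1))
    (hu : u ∈ (brToSph n).range) :
    normLen n u ≤ (n * (n - 1) / 2) * gnLen n u := by
  obtain ⟨l0, hl0, e0⟩ := gn_word n u hu
  have hmem : gnLen n u ∈ {k | ∃ l : List (SphereMCG (n + 1)),
    (∀ a ∈ l, a ∈ SimpleImg n ∨ a⁻¹ ∈ SimpleImg n ∨ a = ρSph (n + 1) ∨ a = (ρSph (n + 1))⁻¹) ∧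
      l.prod = u ∧ l.length = k} := by
    apply Nat.sInf_mem
    refine ⟨l0.length, l0, fun a ha => ?_, e0, rfl⟩
    rcases hl0 a ha with h | h
    · exact Or.inl h
    · exact Or.inr (Or.inl h)
  obtain ⟨l, hl, e, hlen⟩ := hmem
  obtain ⟨L, j, h1, h2, h3⟩ := R_gn n hn l hl 0
  rw [pow_zero, one_mul, e] at h2
  have hL : L.prod ∈ (brToSph n).range := Subgroup.list_prod_mem _ fun a ha => letter_range (h1 a ha)
  have hj : ρSph (n + 1) ^ j ∈ (brToSph n).range := by
    rw [h2] at hu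
    exact (Subgroup.mul_mem_cancel_left _ hL).1 hu
  rw [ρpow_eq_one n j hj, mul_one] at h2
  rw [hlen] at h3
  refine le_trans ?_ h3
  unfold normLen
  apply Nat.sInf_le
  exact ⟨L, h1, h2.symm, rfl⟩

end Braids
end

section
/- In the mapping class group MCG(S_{n+1}) of the (n+1)-times punctured sphere, with σ̂_i the images of the Artin generators of B_n and ρ the clockwise rotation by 2π/(n+1), the following relations hold for 1 ≤ i ≤ n−1 and 0 ≤ j ≤ n: (1) σ̂_i ρ^j = ρ^j σ̂_{i−j (mod n+1)} whenever i − j ≢ 0 and i − j ≢ n (mod n+1); (2) σ̂_i ρ^i = ρ^{i+1} (σ̂_1 ⋯ σ̂_{n−1})^{-1}; (3) σ̂_i ρ^{i+1} = ρ^i (σ̂_{n−1} ⋯ σ̂_1)^{-1}. -/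
namespace Braids

section Aux
variable {G : Type*} [Group G]

theorem aux_comm (s : ℕ → G) (N : ℕ)
    (hc : ∀ i j, 1 ≤ i → i + 2 ≤ j → j ≤ N → s i * s j = s j * s i) (j : ℕ) (hj : j ≤ N) :
    ∀ m, m + 2 ≤ j → s j * ((List.range m).map fun k => s (k + 1)).prod =
      ((List.range m).map fun k => s (k + 1)).prod * s j := by
  intro m
  induction m with
  | zero => simp
  | succ m ih =>
    intro h
    have h1 := ih (by omega)
    have h2 := hc (m + 1) j (by omega) (by omega) hj
    simp only [List.range_succ, List.map_append, List.map_cons, List.map_nil, List.prod_append,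
      List.prod_cons, List.prod_nil, mul_one]
    rw [← mul_assoc, h1, mul_assoc, mul_assoc, h2]

theorem aux_conj (s : ℕ → G) (N : ℕ)
    (hb : ∀ i, 1 ≤ i → i + 1 ≤ N → s i * s (i + 1) * s i = s (i + 1) * s i * s (i + 1))
    (hc : ∀ i j, 1 ≤ i → i + 2 ≤ j → j ≤ N → s i * s j = s j * s i) (k : ℕ) (hk : 1 ≤ k)
    (m : ℕ) (hkm : k + 1 ≤ m) : m ≤ N →
    s (k + 1) * ((List.range m).map fun k => s (k + 1)).prod =
      ((List.range m).map fun k => s (k + 1)).prod * s k := by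
  induction m, hkm using Nat.le_induction with
  | base =>
    intro h
    obtain ⟨l, rfl⟩ : ∃ l, k = l + 1 := ⟨k - 1, by omega⟩
    have h1 := aux_comm s N hc (l + 1 + 1) h l (by omega)
    have h2 := hb (l + 1) (by omega) h
    simp only [List.range_succ, List.map_append, List.map_cons, List.map_nil, List.prod_append,
      List.prod_cons, List.prod_nil, mul_one]
    rw [← mul_assoc, ← mul_assoc, h1]
    simp only [mul_assoc] at h2 ⊢
    rw [h2]
  | succ m hm ih =>
    intro h
    have h1 := ih (by omega)
    have h2 := hc k (m + 1) hk (by omega) h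
    rw [List.range_succ]
    simp only [List.map_append, List.map_cons, List.map_nil, List.prod_append,
      List.prod_cons, List.prod_nil, mul_one]
    rw [← mul_assoc, h1, mul_assoc, mul_assoc, h2]

theorem aux_pow (s : ℕ → G) (N : ℕ) (r : G)
    (h : ∀ k, 1 ≤ k → k + 1 ≤ N → s (k + 1) * r = r * s k) (k : ℕ) (hk : 1 ≤ k) :
    ∀ j, k + j ≤ N → s (k + j) * r ^ j = r ^ j * s k := by
  intro j
  induction j with
  | zero => simp
  | succ j ih =>
    intro hj
    rw [pow_succ', ← mul_assoc, ← add_assoc, h (k + j) (by omega) (by omega), mul_assoc,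
      ih (by omega), mul_assoc]

/-- `P = s 1 ⋯ s m` conjugated by `r`. -/
theorem aux_shift (s : ℕ → G) (N : ℕ) (r : G)
    (h : ∀ k, 1 ≤ k → k + 1 ≤ N → s (k + 1) * r = r * s k) :
    ∀ m, m + 1 ≤ N → s 1 * (r * ((List.range m).map fun k => s (k + 1)).prod) =
      ((List.range (m + 1)).map fun k => s (k + 1)).prod * r := by
  intro m
  induction m with
  | zero => simp
  | succ m ih =>
    intro hm
    have h1 := ih (by omega)
    have h2 := h (m + 1) (by omega) hm
    have hs : ∀ l, ((List.range (l + 1)).map fun k => s (k + 1)).prod =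
        ((List.range l).map fun k => s (k + 1)).prod * s (l + 1) := by
      intro l
      simp [List.range_succ]
    rw [hs (m + 1)]
    rw [mul_assoc _ _ r, h2, ← mul_assoc _ r (s (m + 1)), ← h1, hs m]
    simp only [mul_assoc]

end Aux

theorem sph_key (m : ℕ) : ∀ r ∈ sphereRels m, PresentedGroup.mk (sphereRels m) r = 1 :=
  fun r hr => (QuotientGroup.eq_one_iff r).2 (Subgroup.subset_normalClosure hr)

theorem shat_eq (n k : ℕ) (h1 : 1 ≤ k) (h2 : k ≤ n) :
    shat (n + 1) k = PresentedGroup.mk (sphereRels (n + 1))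
      (FreeGroup.of (⟨k - 1, by omega⟩ : Fin (n + 1 - 1))) := by
  unfold shat
  rw [dif_pos ⟨h1, by omega⟩]
  rfl

theorem mk_fgen (n k : ℕ) :
    PresentedGroup.mk (sphereRels (n + 1)) (fgen (n + 1) k) = shat (n + 1) (k + 1) := by
  unfold fgen shat
  by_cases h : k < n
  · rw [dif_pos (by omega), dif_pos (by omega)]; rfl
  · rw [dif_neg (by omega), dif_neg (by omega)]; simp

theorem rho_eq (n : ℕ) :
    ρSph (n + 1) = ((List.range n).map fun k => shat (n + 1) (k + 1)).prod := by
  unfold ρSph fullRow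
  rw [map_list_prod, List.map_map]
  congr 1
  exact List.map_congr_left fun k _ => mk_fgen n k

theorem rhoRev_eq (n : ℕ) :
    PresentedGroup.mk (sphereRels (n + 1)) (fullRowRev (n + 1)) =
      ((List.range n).reverse.map fun k => shat (n + 1) (k + 1)).prod := by
  unfold fullRowRev
  rw [map_list_prod, List.map_map]
  congr 1
  exact List.map_congr_left fun k _ => mk_fgen n k

theorem shat_braid (n i : ℕ) (h1 : 1 ≤ i) (h2 : i + 1 ≤ n) :
    shat (n + 1) i * shat (n + 1) (i + 1) * shat (n + 1) i =
      shat (n + 1) (i + 1) * shat (n + 1) i * shat (n + 1) (i + 1) := by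
  rw [shat_eq n i h1 (by omega), shat_eq n (i + 1) (by omega) h2]
  have := sph_key (n + 1) _ (Set.mem_union_left _
    (Or.inl ⟨⟨i - 1, by omega⟩, ⟨i + 1 - 1, by omega⟩, by simp; omega, rfl⟩))
  rw [map_mul, map_inv, mul_inv_eq_one] at this
  simpa only [map_mul] using this

theorem shat_comm (n i j : ℕ) (h1 : 1 ≤ i) (h2 : i + 2 ≤ j) (h3 : j ≤ n) :
    shat (n + 1) i * shat (n + 1) j = shat (n + 1) j * shat (n + 1) i := by
  rw [shat_eq n i h1 (by omega), shat_eq n j (by omega) h3]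
  have := sph_key (n + 1) _ (Set.mem_union_left _
    (Or.inr ⟨⟨i - 1, by omega⟩, ⟨j - 1, by omega⟩, by simp; omega, rfl⟩))
  rw [map_mul, map_inv, mul_inv_eq_one] at this
  simpa only [map_mul] using this

/-- **Relations in `MCG(S_{n+1})`** (deduced from Birman's presentation), where `σ̂_i` are
the images of the Artin generators of `B_n` and `ρ` is the rotation by `2π/(n+1)`:
for `1 ≤ i ≤ n-1` and `0 ≤ j ≤ n`,
1. `σ̂_i ρ^j = ρ^j σ̂_{i-j (mod n+1)}` whenever `i - j ≢ 0, n (mod n+1)`;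
2. `σ̂_i ρ^i = ρ^{i+1} (σ̂_1 ⋯ σ̂_{n-1})⁻¹`;
3. `σ̂_i ρ^{i+1} = ρ^i (σ̂_{n-1} ⋯ σ̂_1)⁻¹`. -/
theorem sphereMCG_rotation_relations (n : ℕ) (hn : 3 ≤ n) :
    (∀ i j : ℕ, 1 ≤ i → i ≤ n - 1 → j ≤ n →
        (i + (n + 1) - j) % (n + 1) ≠ 0 → (i + (n + 1) - j) % (n + 1) ≠ n →
        shat (n + 1) i * ρSph (n + 1) ^ j =
          ρSph (n + 1) ^ j * shat (n + 1) ((i + (n + 1) - j) % (n + 1))) ∧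
    (∀ i : ℕ, 1 ≤ i → i ≤ n - 1 →
        shat (n + 1) i * ρSph (n + 1) ^ i =
          ρSph (n + 1) ^ (i + 1) *
            (((List.range (n - 1)).map fun k => shat (n + 1) (k + 1)).prod)⁻¹) ∧
    (∀ i : ℕ, 1 ≤ i → i ≤ n - 1 →
        shat (n + 1) i * ρSph (n + 1) ^ (i + 1) =
          ρSph (n + 1) ^ i *
            (((List.range (n - 1)).reverse.map fun k => shat (n + 1) (k + 1)).prod)⁻¹) := by
  have hpow : ρSph (n + 1) ^ (n + 1) = 1 := by
    have := sph_key (n + 1) (fullRow (n + 1) ^ (n + 1)) (Or.inr (Or.inr rfl))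
    rwa [map_pow] at this
  have hrev : ρSph (n + 1) *
      ((List.range n).reverse.map fun k => shat (n + 1) (k + 1)).prod = 1 := by
    have := sph_key (n + 1) (fullRow (n + 1) * fullRowRev (n + 1)) (Or.inr (Or.inl rfl))
    rwa [map_mul, rhoRev_eq] at this
  have hstep : ∀ k, 1 ≤ k → k + 1 ≤ n →
      shat (n + 1) (k + 1) * ρSph (n + 1) = ρSph (n + 1) * shat (n + 1) k := by
    intro k h1 h2
    rw [rho_eq]
    exact aux_conj (shat (n + 1)) n (shat_braid n) (shat_comm n) k h1 n h2 le_rfl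
  have hrho := rho_eq n
  have hP := aux_shift (shat (n + 1)) n (ρSph (n + 1)) hstep (n - 1) (by omega)
  rw [show n - 1 + 1 = n by omega, ← hrho] at hP
  have hj := aux_pow (shat (n + 1)) n (ρSph (n + 1)) hstep
  have hn1 := hj 1 le_rfl (n - 1) (by omega)
  rw [show 1 + (n - 1) = n by omega] at hn1
  have hQ : ((List.range n).reverse.map fun k => shat (n + 1) (k + 1)).prod =
      shat (n + 1) n *
        ((List.range (n - 1)).reverse.map fun k => shat (n + 1) (k + 1)).prod := by
    obtain ⟨l, rfl⟩ : ∃ l, n = l + 1 := ⟨n - 1, by omega⟩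
    simp [List.range_succ]
  rw [hQ] at hrev
  generalize ρSph (n + 1) = r at *
  generalize ((List.range (n - 1)).map fun k => shat (n + 1) (k + 1)).prod = P at *
  generalize ((List.range (n - 1)).reverse.map fun k => shat (n + 1) (k + 1)).prod = Q at *
  refine ⟨?_, ?_, ?_⟩
  · intro i j hi1 hi2 hjn h0 hn'
    rcases Nat.lt_or_ge j i with h | h
    · have e : (i + (n + 1) - j) % (n + 1) = i - j := by
        rw [show i + (n + 1) - j = (i - j) + (n + 1) by omega, Nat.add_mod_right]
        exact Nat.mod_eq_of_lt (by omega)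
      rw [e]
      have := hj (i - j) (by omega) j (by omega)
      rwa [show i - j + j = i by omega] at this
    · rcases Nat.eq_or_lt_of_le h with h | h
      · subst h
        exact absurd (by simp) h0
      have e : (i + (n + 1) - j) % (n + 1) = i + (n + 1 - j) := by
        rw [Nat.mod_eq_of_lt (by omega)]; omega
      rw [e]
      have := hj i hi1 (n + 1 - j) (by omega)
      have hr : r ^ (n + 1 - j) = (r ^ j)⁻¹ := by
        rw [eq_inv_iff_mul_eq_one, ← pow_add, show n + 1 - j + j = n + 1 by omega, hpow]
      rw [hr] at this
      generalize r ^ j = t at *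
      rw [eq_inv_mul_iff_mul_eq, ← mul_assoc, mul_inv_eq_iff_eq_mul] at this
      exact this.symm
  · intro i hi1 hi2
    have h1 := hj 1 le_rfl (i - 1) (by omega)
    rw [show 1 + (i - 1) = i by omega] at h1
    obtain ⟨l, rfl⟩ : ∃ l, i = l + 1 := ⟨i - 1, by omega⟩
    simp only [Nat.add_sub_cancel] at h1
    rw [eq_mul_inv_iff_mul_eq, pow_succ, ← mul_assoc, h1, pow_succ, pow_succ]
    simp only [mul_assoc]
    rw [hP]
  · intro i hi1 hi2
    have h1 := hj 1 le_rfl (i - 1) (by omega)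
    rw [show 1 + (i - 1) = i by omega] at h1
    obtain ⟨l, rfl⟩ : ∃ l, i = l + 1 := ⟨i - 1, by omega⟩
    simp only [Nat.add_sub_cancel] at h1
    have hr : r ^ (n - 1) = (r ^ 2)⁻¹ := by
      rw [eq_inv_iff_mul_eq_one, ← pow_add, show n - 1 + 2 = n + 1 by omega, hpow]
    rw [hr, eq_inv_mul_iff_mul_eq, ← mul_assoc, mul_inv_eq_iff_eq_mul] at hn1
    have h3 : shat (n + 1) 1 * (r ^ 2 * Q) = r := by
      rw [← mul_assoc, ← hn1, pow_two, mul_assoc, mul_assoc, hrev, mul_one]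
    rw [eq_mul_inv_iff_mul_eq, add_assoc, show 1 + 1 = 2 from rfl, pow_add, ← mul_assoc, h1,
      mul_assoc, mul_assoc, h3, pow_succ]


end Braids
end

section
/- Let x ∈ B_n have left normal form x = Δ^p x_1⋯x_r. Then the minimal length |x| of a word representing x in the alphabet of simple elements and their inverses equals max(|p|, r, p + r); in particular the canonical length satisfies ℓ(x) ≤ |x|. -/
namespace Braids

open scoped Classical

/-- A pair of simple elements `(a, b)` is left-weighted if for every non-trivial positive
prefix `t` of `b`, the product `a * t` is not simple. -/
def LeftWeighted {n : ℕ} (a b : Braid n) : Prop :=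
  ∀ t : Braid n, t ∈ Pos n → PrefixLE t b → t ≠ 1 → ¬IsSimple (a * t)

/-- `InfIs x p` says `p = inf(x) = max {m : ℤ | Δ^m ≼ x}`. -/
def InfIs {n : ℕ} (x : Braid n) (p : ℤ) : Prop :=
  PrefixLE (Δ n ^ p) x ∧ ¬PrefixLE (Δ n ^ (p + 1)) x

/-- `IsNormalForm x p l` says that `Δ^p * l.prod` is the left normal form of `x`:
`p = inf(x)`, the factors are simple, the last factor is non-trivial, and consecutive
pairs of factors are left-weighted.  The canonical length is `ℓ(x) = l.length`. -/
def IsNormalForm {n : ℕ} (x : Braid n) (p : ℤ) (l : List (Braid n)) : Prop :=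
  x = Δ n ^ p * l.prod ∧ InfIs x p ∧ (∀ s ∈ l, IsSimple s) ∧
    l.getLast? ≠ some 1 ∧ List.Chain' LeftWeighted l

/-- The canonical length `ℓ(x)`: the number of simple factors in the left normal form. -/
noncomputable def clen {n : ℕ} (x : Braid n) : ℕ :=
  sInf {r | ∃ p l, IsNormalForm x p l ∧ l.length = r}

/-- `InSSS x y` : `y` belongs to the Super Summit Set of `x`, i.e. `y` is a conjugate of `x`
of minimal canonical length among all conjugates of `x`. -/
def InSSS {n : ℕ} (x y : Braid n) : Prop :=
  IsConj x y ∧ ∀ z : Braid n, IsConj x z → clen y ≤ clen z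

/-- `IsPreferredPrefix x t` : `t` is the preferred prefix `𝔭(x)`.  If `x = Δ^p x₁ ⋯ x_r`
is in left normal form with `r > 0`, then `t` is the maximal positive prefix of
`τ^{-p}(x₁) = Δ^p x₁ Δ^{-p}` such that `x_r * t` is simple; if `r = 0` then `t = 1`. -/
def IsPreferredPrefix {n : ℕ} (x t : Braid n) : Prop :=
  ∃ p l, IsNormalForm x p l ∧
    ((l = [] ∧ t = 1) ∨
      ∃ x₁ xr : Braid n, l.head? = some x₁ ∧ l.getLast? = some xr ∧
        t ∈ Pos n ∧ PrefixLE t (Δ n ^ p * x₁ * (Δ n ^ p)⁻¹) ∧ IsSimple (xr * t) ∧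
        ∀ t' : Braid n, t' ∈ Pos n → PrefixLE t' (Δ n ^ p * x₁ * (Δ n ^ p)⁻¹) →
          IsSimple (xr * t') → PrefixLE t' t)

/-- Cyclic sliding: conjugation of `x` by its preferred prefix `𝔭(x)`. -/
noncomputable def slide {n : ℕ} (x : Braid n) : Braid n :=
  if h : ∃ t, IsPreferredPrefix x t then h.choose⁻¹ * x * h.choose else x

/-- A braid is rigid if its preferred prefix is trivial. -/
def Rigid {n : ℕ} (x : Braid n) : Prop := IsPreferredPrefix x 1


/-- Braid relations on the free monoid. -/
inductive PRel (m : ℕ) : FreeMonoid (Fin m) → FreeMonoid (Fin m) → Prop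
  | br (i j : Fin m) (h : (i : ℕ) + 1 = j) :
      PRel m (.of i * (.of j * .of i)) (.of j * (.of i * .of j))
  | far (i j : Fin m) (h : (i : ℕ) + 2 ≤ j) : PRel m (.of i * .of j) (.of j * .of i)

abbrev PM (m : ℕ) := (conGen (PRel m)).Quotient

def pmk (m : ℕ) : FreeMonoid (Fin m) →* PM m := (conGen (PRel m)).mk'

def s {m : ℕ} (i : Fin m) : PM m := pmk m (.of i)

def Far {m : ℕ} (i j : Fin m) : Prop := (i : ℕ) + 2 ≤ j ∨ (j : ℕ) + 2 ≤ i
def Adj {m : ℕ} (i j : Fin m) : Prop := (i : ℕ) + 1 = j ∨ (j : ℕ) + 1 = i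

lemma Far.symm {m : ℕ} {i j : Fin m} (h : Far i j) : Far j i := Or.symm h
lemma Adj.symm {m : ℕ} {i j : Fin m} (h : Adj i j) : Adj j i := Or.symm h

lemma tri {m : ℕ} (i j : Fin m) : i = j ∨ Far i j ∨ Adj i j := by
  unfold Far Adj; rw [Fin.ext_iff]; omega

lemma pmk_rel {m : ℕ} {a b : FreeMonoid (Fin m)} (h : PRel m a b) : pmk m a = pmk m b :=
  (Con.eq _).2 (ConGen.Rel.of _ _ h)

lemma s_far {m : ℕ} {i j : Fin m} (h : Far i j) : s i * s j = s j * s i := by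
  rcases h with h | h
  · simpa [s] using pmk_rel (.far i j h)
  · simpa [s] using (pmk_rel (.far j i h)).symm

lemma s_adj {m : ℕ} {i j : Fin m} (h : Adj i j) : s i * (s j * s i) = s j * (s i * s j) := by
  rcases h with h | h
  · simpa [s] using pmk_rel (.br i j h)
  · simpa [s] using (pmk_rel (.br j i h)).symm

lemma s_far' {m : ℕ} {i j : Fin m} (h : Far i j) (C : PM m) :
    s i * (s j * C) = s j * (s i * C) := by
  rw [← mul_assoc, s_far h, mul_assoc]

lemma s_adj' {m : ℕ} {i j : Fin m} (h : Adj i j) (C : PM m) :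
    s i * (s j * (s i * C)) = s j * (s i * (s j * C)) := by
  have := congrArg (· * C) (s_adj h)
  simpa [mul_assoc] using this

def lenHom (m : ℕ) : PM m →* Multiplicative ℕ :=
  Con.lift _ (FreeMonoid.lift fun _ => Multiplicative.ofAdd 1) (by
    refine Con.conGen_le.2 ?_
    intro a b h
    cases h <;> simp [Con.ker_rel])

def ln {m : ℕ} (a : PM m) : ℕ := (lenHom m a).toAdd

@[simp] lemma ln_mul {m : ℕ} (a b : PM m) : ln (a * b) = ln a + ln b := by simp [ln]
@[simp] lemma ln_one {m : ℕ} : ln (1 : PM m) = 0 := by simp [ln]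
@[simp] lemma ln_s {m : ℕ} (i : Fin m) : ln (s i) = 1 := by
  show (lenHom m (pmk m (.of i))).toAdd = 1
  simp [lenHom, pmk]

/-- The conclusion of Garside's key lemma. -/
inductive GP {m : ℕ} : Fin m → PM m → Fin m → PM m → Prop
  | eq (i A) : GP i A i A
  | far (i j) (h : Far i j) (C) : GP i (s j * C) j (s i * C)
  | adj (i j) (h : Adj i j) (C) : GP i (s j * (s i * C)) j (s i * (s j * C))

lemma GP.symm {m : ℕ} {i j : Fin m} {A B : PM m} (h : GP i A j B) : GP j B i A := by
  cases h with
  | eq => exact .eq _ _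
  | far _ h C => exact .far _ _ h.symm C
  | adj _ h C => exact .adj _ _ h.symm C

lemma GP.mul {m : ℕ} {i j : Fin m} {A B : PM m} (h : GP i A j B) (D : PM m) :
    GP i (A * D) j (B * D) := by
  cases h with
  | eq => exact .eq _ _
  | far _ h C => simpa only [mul_assoc] using GP.far _ _ h (C * D)
  | adj _ h C => simpa only [mul_assoc] using GP.adj _ _ h (C * D)

def GH (m N : ℕ) : Prop := ∀ (i j : Fin m) (A B : PM m), ln A < N → s i * A = s j * B → GP i A j B

lemma GP.eq_inv {m : ℕ} {i : Fin m} {A B : PM m} (h : GP i A i B) : A = B := by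
  cases h with
  | eq => rfl
  | far _ h C => exact rfl
  | adj _ h C => exact rfl

lemma GP.far_inv {m : ℕ} {i j : Fin m} {A B : PM m} (hf : Far i j) (h : GP i A j B) :
    ∃ C, A = s j * C ∧ B = s i * C := by
  cases h with
  | eq => unfold Far at hf; omega
  | far _ h C => exact ⟨_, rfl, rfl⟩
  | adj _ h C => unfold Far Adj at *; omega

lemma GP.adj_inv {m : ℕ} {i j : Fin m} {A B : PM m} (hf : Adj i j) (h : GP i A j B) :
    ∃ C, A = s j * (s i * C) ∧ B = s i * (s j * C) := by
  cases h with
  | eq => unfold Adj at hf; omega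
  | far _ h C => unfold Far Adj at *; omega
  | adj _ h C => exact ⟨_, rfl, rfl⟩


lemma GP.trans_far {m N : ℕ} (H : GH m N) {i k j : Fin m} {C1 B : PM m} (hN : ln (s i * C1) ≤ N)
    (hik : Far i k) (h2 : GP k (s i * C1) j B) : GP i (s k * C1) j B := by
  generalize hX : s i * C1 = X at h2
  have hl : ln C1 < N := by simp at hN; omega
  cases h2 with
  | eq => subst hX; exact .far _ _ hik C1
  | far _ hkj C2 =>
    rcases tri i j with rfl | hij | hij
    · rw [(H _ _ _ _ hl hX).eq_inv]; exact .eq _ _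
    · obtain ⟨D, rfl, rfl⟩ := (H _ _ _ _ hl hX).far_inv hij
      rw [s_far' hkj, s_far' hik.symm]
      exact .far _ _ hij _
    · obtain ⟨D, rfl, rfl⟩ := (H _ _ _ _ hl hX).adj_inv hij
      rw [s_far' hkj, s_far' hik.symm, s_far' hik.symm, s_far' hkj]
      exact .adj _ _ hij _
  | adj _ hkj C2 =>
    have hl2 := congrArg ln hX
    simp at hl2
    rcases tri i j with rfl | hij | hij
    · unfold Far Adj at *; omega
    · obtain ⟨D, rfl, hD⟩ := (H _ _ _ _ hl hX).far_inv hij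
      simp at hl2 hl
      obtain ⟨F, rfl, rfl⟩ := (H _ _ _ _ (by omega) hD).far_inv hik.symm
      rw [s_far' hij.symm, s_far' hik.symm, s_adj' hkj]
      exact .far _ _ hij _
    · obtain ⟨D, rfl, hD⟩ := (H _ _ _ _ hl hX).adj_inv hij
      simp at hl2 hl
      obtain ⟨F, rfl, hF⟩ := (H _ _ _ _ (by omega) hD).far_inv hik.symm
      obtain ⟨G, rfl, rfl⟩ := (H _ _ _ _ (by omega) hF).adj_inv hkj.symm
      have e1 : s k * (s j * (s i * (s k * (s j * G)))) = s j * (s i * (s k * (s j * (s i * G)))) := by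
        rw [s_far' hik, s_adj' hkj, s_adj' hij.symm, s_far' hik.symm]
      have e2 : s k * (s j * (s i * (s j * (s k * G)))) = s i * (s j * (s k * (s j * (s i * G)))) := by
        rw [s_adj' hij.symm, s_far' hik.symm, s_far' hik G, s_adj' hkj]
      rw [e1, e2]
      exact .adj _ _ hij _

lemma GP.trans {m N : ℕ} (H : GH m N) {i k j : Fin m} {A C B : PM m} (hN : ln C ≤ N)
    (h1 : GP i A k C) (h2 : GP k C j B) : GP i A j B := by
  cases h1 with
  | eq => exact h2
  | far _ hik C1 => exact GP.trans_far H hN hik h2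
  | adj _ hik C1 =>
    generalize hX : s i * (s k * C1) = X at h2
    have hl : ln C1 + 1 < N := by subst hX; simp at hN; omega
    cases h2 with
    | eq => subst hX; exact .adj _ _ hik C1
    | far _ hkj C2 =>
      rw [hX] at hN
      refine (GP.trans_far H hN hkj.symm ?_).symm
      rw [← hX]
      exact .adj _ _ hik.symm C1
    | adj _ hkj C2 =>
      have hl2 := congrArg ln hX
      simp at hl2
      rcases tri i j with rfl | hij | hij
      · have h1 := (H _ _ _ _ (by simp; omega) hX).eq_inv
        have h2 := (H _ _ _ _ (by omega) h1).eq_inv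
        rw [h2]; exact .eq _ _
      · obtain ⟨E, hE1, hE2⟩ := (H _ _ _ _ (by simp; omega) hX).far_inv hij
        obtain ⟨F, rfl, rfl⟩ := (H _ _ _ _ (by omega) hE1).adj_inv hkj
        obtain ⟨G, rfl, hG⟩ := (H _ _ _ _ (by omega) hE2).adj_inv hik.symm
        simp at hl2 hl
        have hl3 := congrArg ln hG
        simp at hl3
        have hG' := (H _ _ _ _ (by simp; omega) hG).eq_inv
        obtain ⟨L, rfl, rfl⟩ := (H _ _ _ _ (by omega) hG').far_inv hij.symm
        have e1 : s k * (s i * (s j * (s k * (s i * L))))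
            = s j * (s k * (s j * (s i * (s k * L)))) := by
          rw [s_far' hij, s_adj' hik, s_adj' hkj]
        have e2 : s k * (s j * (s i * (s k * (s j * L))))
            = s i * (s k * (s j * (s i * (s k * L)))) := by
          rw [s_far' hij.symm, s_adj' hkj.symm, s_adj' hik.symm, s_far' hij]
        rw [e1, e2]
        exact .far _ _ hij _
      · unfold Adj at *; omega

lemma ln_pmk {m : ℕ} (w : FreeMonoid (Fin m)) : ln (pmk m w) = w.length := by
  induction w using FreeMonoid.inductionOn' with
  | one => simp
  | of_mul x w ih => 
    rw [map_mul, ln_mul, ih]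
    simp [FreeMonoid.length_mul, show pmk m (.of x) = s x from rfl]

lemma rel_GP {m N : ℕ} (H : GH m N) {u v : FreeMonoid (Fin m)} (h : ConGen.Rel (PRel m) u v) :
    u.length = v.length ∧ (u.length ≤ N + 1 → ∀ i j A B, u = .of i * A → v = .of j * B →
      GP i (pmk m A) j (pmk m B)) := by
  have hlen : ∀ {u v}, ConGen.Rel (PRel m) u v → u.length = v.length := by
    intro u v h
    rw [← ln_pmk, ← ln_pmk]
    exact congrArg ln ((Con.eq (conGen (PRel m))).2 h)
  refine ⟨hlen h, ?_⟩
  induction h with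
  | of x y h =>
    intro _ i j A B hA hB
    cases h with
    | br i' j' h =>
      have hA' := congrArg FreeMonoid.toList hA
      have hB' := congrArg FreeMonoid.toList hB
      simp at hA' hB'
      obtain ⟨rfl, hA'⟩ := hA'
      obtain ⟨rfl, hB'⟩ := hB'
      have e1 : A = .of j' * (.of i' * 1) := by
        apply FreeMonoid.toList.injective; simp [← hA']
      have e2 : B = .of i' * (.of j' * 1) := by
        apply FreeMonoid.toList.injective; simp [← hB']
      subst e1 e2
      exact .adj _ _ (Or.inl h) 1
    | far i' j' h =>
      have hA' := congrArg FreeMonoid.toList hA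
      have hB' := congrArg FreeMonoid.toList hB
      simp at hA' hB'
      obtain ⟨rfl, hA'⟩ := hA'
      obtain ⟨rfl, hB'⟩ := hB'
      have e1 : A = .of j' * 1 := by
        apply FreeMonoid.toList.injective; simp [← hA']
      have e2 : B = .of i' * 1 := by
        apply FreeMonoid.toList.injective; simp [← hB']
      subst e1 e2
      exact .far _ _ (Or.inl h) 1
  | refl x =>
    intro _ i j A B hA hB
    subst hA
    have hB' := congrArg FreeMonoid.toList hB
    simp at hB'
    obtain ⟨rfl, hB'⟩ := hB'
    rw [hB']
    exact .eq _ _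
  | symm h ih =>
    intro hl i j A B hA hB
    exact (ih (by rw [hlen h]; exact hl) j i B A hB hA).symm
  | @trans x y z h1 h2 ih1 ih2 =>
    intro hl i j A B hA hB
    have hl1 := hlen h1
    cases y using FreeMonoid.casesOn with
    | one => subst hA; simp [FreeMonoid.length_mul] at hl1
    | of_mul k C =>
      have hC : ln (pmk m C) ≤ N := by
        rw [ln_pmk]
        simp [FreeMonoid.length_mul] at hl1; omega
      exact GP.trans H hC (ih1 hl _ _ _ _ hA rfl) (ih2 (by omega) _ _ _ _ rfl hB)
  | @mul w x y z h1 h2 ih1 ih2 =>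
    intro hl i j A B hA hB
    have hl1 := hlen h1
    simp [FreeMonoid.length_mul] at hl
    cases w using FreeMonoid.casesOn with
    | one =>
      cases x using FreeMonoid.casesOn with
      | one =>
        exact ih2 (by omega) _ _ _ _ (by simpa using hA) (by simpa using hB)
      | of_mul => simp [FreeMonoid.length_mul] at hl1; omega
    | of_mul i' A' =>
      cases x using FreeMonoid.casesOn with
      | one => simp [FreeMonoid.length_mul] at hl1
      | of_mul j' B' =>
        have hA' := congrArg FreeMonoid.toList hA
        have hB' := congrArg FreeMonoid.toList hB
        simp at hA' hB'
        obtain ⟨rfl, hA'⟩ := hA'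
        obtain ⟨rfl, hB'⟩ := hB'
        have e1 : A = A' * y := by
          apply FreeMonoid.toList.injective; simp [← hA']
        have e2 : B = B' * z := by
          apply FreeMonoid.toList.injective; simp [← hB']
        have := (ih1 (by omega) _ _ _ _ rfl rfl).mul (pmk m y)
        rw [e1, e2, map_mul, map_mul]
        convert this using 2
        exact (Con.eq (conGen (PRel m))).2 h2.symm

lemma pmk_surj (m : ℕ) : Function.Surjective (pmk m) := Con.mk'_surjective

lemma GH_all (m N : ℕ) : GH m N := by
  induction N with
  | zero => intro i j A B h; omega
  | succ N ih =>
    intro i j A B hA h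
    obtain ⟨a, rfl⟩ := pmk_surj m A
    obtain ⟨b, rfl⟩ := pmk_surj m B
    have : pmk m (.of i * a) = pmk m (.of j * b) := by simpa [s] using h
    refine (rel_GP ih ((Con.eq (conGen (PRel m))).1 this)).2 ?_ _ _ _ _ rfl rfl
    rw [ln_pmk] at hA
    simp [FreeMonoid.length_mul]; omega

/-- Garside's key lemma. -/
lemma garside {m : ℕ} {i j : Fin m} {A B : PM m} (h : s i * A = s j * B) : GP i A j B :=
  GH_all m (ln A + 1) _ _ _ _ (by omega) h

lemma PM.ind {m : ℕ} {P : PM m → Prop} (h1 : P 1) (hs : ∀ i a, P a → P (s i * a)) (a : PM m) :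
    P a := by
  obtain ⟨w, rfl⟩ := pmk_surj m a
  induction w using FreeMonoid.inductionOn' with
  | one => simpa using h1
  | of_mul x w ih => rw [map_mul]; exact hs _ _ ih

lemma PM.cases {m : ℕ} (a : PM m) : a = 1 ∨ ∃ i b, a = s i * b := by
  induction a using PM.ind with
  | h1 => exact .inl rfl
  | hs i a _ => exact .inr ⟨i, a, rfl⟩

lemma PM.cancel {m : ℕ} (c : PM m) {a b : PM m} (h : c * a = c * b) : a = b := by
  induction c using PM.ind with
  | h1 => simpa using h
  | hs i c ih =>
    rw [mul_assoc, mul_assoc] at h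
    exact ih (garside h).eq_inv

lemma PM.dvd_cancel {m : ℕ} (c : PM m) {a b : PM m} (h : c * a ∣ c * b) : a ∣ b := by
  obtain ⟨d, hd⟩ := h
  rw [mul_assoc] at hd
  exact ⟨d, PM.cancel c hd⟩

/-- Two left divisors common to `y` and `z` have a common multiple dividing both. -/
lemma PM.lcm {m : ℕ} (N : ℕ) : ∀ (y z a b : PM m), ln y ≤ N → a ∣ y → b ∣ y → a ∣ z → b ∣ z →
    ∃ c, a ∣ c ∧ b ∣ c ∧ c ∣ y ∧ c ∣ z := by
  induction N with
  | zero =>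
    intro y z a b hy hay hby haz hbz
    rcases PM.cases a with rfl | ⟨i, a', rfl⟩
    · exact ⟨b, one_dvd _, dvd_rfl, hby, hbz⟩
    · obtain ⟨d, rfl⟩ := hay
      simp at hy
  | succ N ih =>
    intro y z a b hy hay hby haz hbz
    rcases PM.cases a with rfl | ⟨i, a', rfl⟩
    · exact ⟨b, one_dvd _, dvd_rfl, hby, hbz⟩
    rcases PM.cases b with rfl | ⟨j, b', rfl⟩
    · exact ⟨_, dvd_rfl, one_dvd _, hay, haz⟩
    -- common upper bound of generators
    have key : ∃ p q : PM m, s i * p = s j * q ∧ (∀ y, s i ∣ y → s j ∣ y → s i * p ∣ y) := by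
      rcases tri i j with rfl | h | h
      · exact ⟨1, 1, rfl, fun y h _ => by simpa using h⟩
      · refine ⟨s j, s i, s_far h, ?_⟩
        rintro y ⟨u, rfl⟩ ⟨v, hv⟩
        obtain ⟨C, rfl, rfl⟩ := (garside hv).far_inv h
        exact ⟨C, by simp [mul_assoc]⟩
      · refine ⟨s j * s i, s i * s j, s_adj h, ?_⟩
        rintro y ⟨u, rfl⟩ ⟨v, hv⟩
        obtain ⟨C, rfl, rfl⟩ := (garside hv).adj_inv h
        exact ⟨C, by simp [mul_assoc]⟩
    obtain ⟨p, q, hpq, hmin⟩ := key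
    obtain ⟨y', rfl⟩ := hmin y (dvd_of_mul_right_dvd hay) (dvd_of_mul_right_dvd hby)
    obtain ⟨z', rfl⟩ := hmin z (dvd_of_mul_right_dvd haz) (dvd_of_mul_right_dvd hbz)
    have hl := congrArg ln hpq
    simp at hl hy
    rw [mul_assoc] at hay haz
    rw [hpq, mul_assoc] at hby hbz
    obtain ⟨m1, h1a, ⟨d1, rfl⟩, h1y, h1z⟩ := ih (p * y') (p * z') a' p (by simp; omega)
      (PM.dvd_cancel _ hay) ⟨_, rfl⟩ (PM.dvd_cancel _ haz) ⟨_, rfl⟩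
    obtain ⟨m2, h2a, ⟨d2, rfl⟩, h2y, h2z⟩ := ih (q * y') (q * z') b' q (by simp; omega)
      (PM.dvd_cancel _ hby) ⟨_, rfl⟩ (PM.dvd_cancel _ hbz) ⟨_, rfl⟩
    obtain ⟨d, hd1, hd2, hdy, hdz⟩ := ih y' z' d1 d2 (by omega)
      (PM.dvd_cancel _ h1y) (PM.dvd_cancel _ h2y) (PM.dvd_cancel _ h1z) (PM.dvd_cancel _ h2z)
    refine ⟨s i * p * d, ?_, ?_, mul_dvd_mul_left _ hdy, mul_dvd_mul_left _ hdz⟩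
    · rw [mul_assoc]
      exact mul_dvd_mul_left _ (h1a.trans (mul_dvd_mul_left _ hd1))
    · rw [hpq, mul_assoc]
      exact mul_dvd_mul_left _ (h2a.trans (mul_dvd_mul_left _ hd2))

section Delta
variable {M : Type*} [Monoid M]

def Rr (t : ℕ → M) : ℕ → M
  | 0 => 1
  | k + 1 => t k * Rr t k
def Ll (t : ℕ → M) : ℕ → M
  | 0 => 1
  | k + 1 => Ll t k * t k
def Dd (t : ℕ → M) : ℕ → M
  | 0 => 1
  | k + 1 => Dd t k * Rr t (k + 1)

lemma Dd_eq (t : ℕ → M) (k : ℕ) :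
    ((((List.range k).map fun k => (List.range (k + 1)).reverse).flatten).map t).prod = Dd t k := by
  have hR : ∀ k, ((List.range k).reverse.map t).prod = Rr t k := by
    intro k
    induction k with
    | zero => simp [Rr]
    | succ k ih => rw [List.range_succ]; simp [Rr, ← ih]
  induction k with
  | zero => simp [Dd]
  | succ k ih =>
    rw [List.range_succ, List.map_append, List.flatten_append, List.map_append, List.prod_append, ih]
    simp only [Dd, ← hR]; simp

structure BrSeq (t : ℕ → M) (N : ℕ) : Prop where
  br : ∀ i, i + 1 < N → t i * (t (i + 1) * t i) = t (i + 1) * (t i * t (i + 1))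
  far : ∀ i j, i + 2 ≤ j → j < N → t i * t j = t j * t i

variable {t : ℕ → M} {N : ℕ}

lemma Rr_comm (h : BrSeq t N) (k j : ℕ) (hk : k + 1 ≤ j) (hj : j < N) :
    Commute (Rr t k) (t j) := by
  induction k with
  | zero => exact Commute.one_left _
  | succ k ih => exact Commute.mul_left (h.far k j (by omega) hj) (ih (by omega))

lemma Ll_comm (h : BrSeq t N) (k j : ℕ) (hk : k + 1 ≤ j) (hj : j < N) :
    Commute (Ll t k) (t j) := by
  induction k with
  | zero => exact Commute.one_left _
  | succ k ih => exact Commute.mul_left (ih (by omega)) (h.far k j (by omega) hj)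

lemma Dd_comm (h : BrSeq t N) (k j : ℕ) (hk : k + 1 ≤ j) (hj : j < N) :
    Commute (Dd t k) (t j) := by
  induction k with
  | zero => exact Commute.one_left _
  | succ k ih => exact Commute.mul_left (ih (by omega)) (Rr_comm h _ j (by omega) hj)

lemma Dd_left (h : BrSeq t N) (k : ℕ) (hk : k + 1 ≤ N) :
    Dd t (k + 1) = Ll t (k + 1) * Dd t k := by
  induction k with
  | zero => simp [Dd, Ll, Rr]
  | succ k ih =>
    calc Dd t (k + 2) = Dd t (k + 1) * (t (k + 1) * Rr t (k + 1)) := rfl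
      _ = Ll t (k + 1) * (Dd t k * t (k + 1)) * Rr t (k + 1) := by
        rw [ih (by omega)]; simp only [mul_assoc]
      _ = Ll t (k + 1) * (t (k + 1) * Dd t k) * Rr t (k + 1) := by
        rw [(Dd_comm h k (k + 1) le_rfl (by omega)).eq]
      _ = Ll t (k + 2) * Dd t (k + 1) := by
        simp only [Ll, Dd, mul_assoc]

lemma Ll_shift (h : BrSeq t N) (k i : ℕ) (hi : i + 1 < k) (hk : k ≤ N) :
    t (i + 1) * Ll t k = Ll t k * t i := by
  induction k with
  | zero => omega
  | succ k ih =>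
    by_cases hik : i + 1 < k
    · calc t (i + 1) * (Ll t k * t k) = (t (i + 1) * Ll t k) * t k := by rw [mul_assoc]
        _ = Ll t k * (t i * t k) := by rw [ih hik (by omega), mul_assoc]
        _ = Ll t k * t k * t i := by rw [h.far i k (by omega) (by omega), mul_assoc]
    · obtain rfl : k = i + 1 := by omega
      calc t (i + 1) * (Ll t i * t i * t (i + 1)) = (t (i + 1) * Ll t i) * (t i * t (i + 1)) := by
            simp only [mul_assoc]
        _ = Ll t i * (t (i + 1) * (t i * t (i + 1))) := by
            rw [← (Ll_comm h i (i + 1) le_rfl (by omega)).eq, mul_assoc]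
        _ = Ll t i * t i * t (i + 1) * t i := by
            rw [← h.br i (by omega)]; simp only [mul_assoc]

lemma Rr_shift (h : BrSeq t N) (k i : ℕ) (hi : i + 1 < k) (hk : k ≤ N) :
    t i * Rr t k = Rr t k * t (i + 1) := by
  induction k with
  | zero => omega
  | succ k ih =>
    by_cases hik : i + 1 < k
    · calc t i * (t k * Rr t k) = (t i * t k) * Rr t k := by rw [mul_assoc]
        _ = t k * (t i * Rr t k) := by rw [h.far i k (by omega) (by omega), mul_assoc]
        _ = t k * Rr t k * t (i + 1) := by rw [ih hik (by omega), mul_assoc]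
    · obtain rfl : k = i + 1 := by omega
      calc t i * (t (i + 1) * (t i * Rr t i)) = (t i * (t (i + 1) * t i)) * Rr t i := by
            simp only [mul_assoc]
        _ = t (i + 1) * (t i * (t (i + 1) * Rr t i)) := by
            rw [h.br i (by omega)]; simp only [mul_assoc]
        _ = t (i + 1) * (t i * Rr t i) * t (i + 1) := by
            rw [← (Rr_comm h i (i + 1) le_rfl (by omega)).eq]; simp only [mul_assoc]

lemma Dd_flip (h : BrSeq t N) (k : ℕ) (hk : k ≤ N) (i : ℕ) (hi : i < k) :
    t i * Dd t k = Dd t k * t (k - 1 - i) := by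
  induction k generalizing i with
  | zero => omega
  | succ k ih =>
    rcases i with _ | i
    · rcases k with _ | k
      · simp [Dd, Rr]
      · calc t 0 * (Dd t (k + 1) * Rr t (k + 2)) = (t 0 * Dd t (k + 1)) * Rr t (k + 2) := by
              rw [mul_assoc]
          _ = Dd t (k + 1) * (t k * Rr t (k + 2)) := by
              rw [ih (by omega) 0 (by omega), mul_assoc]; rfl
          _ = Dd t (k + 1) * Rr t (k + 2) * t (k + 1) := by
              rw [Rr_shift h _ k (by omega) hk, mul_assoc]
    · rw [Dd_left h k hk]
      calc t (i + 1) * (Ll t (k + 1) * Dd t k) = (t (i + 1) * Ll t (k + 1)) * Dd t k := by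
            rw [mul_assoc]
        _ = Ll t (k + 1) * (t i * Dd t k) := by
            rw [Ll_shift h _ i (by omega) hk, mul_assoc]
        _ = Ll t (k + 1) * Dd t k * t (k + 1 - 1 - (i + 1)) := by
            rw [ih (by omega) i (by omega), mul_assoc]
            congr 3; omega

lemma t_dvd_Dd (h : BrSeq t N) (k : ℕ) (hk : k ≤ N) (i : ℕ) (hi : i < k) : t i ∣ Dd t k := by
  induction k generalizing i with
  | zero => omega
  | succ k ih =>
    rw [Dd_left h k hk]
    rcases i with _ | i
    · apply Dvd.dvd.mul_right
      clear ih hk hi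
      induction k with
      | zero => simp [Ll]
      | succ k ih => exact Dvd.dvd.mul_right ih _
    · obtain ⟨Y, hY⟩ := ih (by omega) i (by omega)
      refine ⟨Ll t (k + 1) * Y, ?_⟩
      rw [hY, ← mul_assoc, ← Ll_shift h _ i (by omega) hk]
      simp only [mul_assoc]

end Delta

/-- Generators of the positive monoid with natural number index. -/
def s' (m i : ℕ) : PM m := if h : i < m then s ⟨i, h⟩ else 1

lemma brSeq (m : ℕ) : BrSeq (s' m) m := by
  constructor
  · intro i hi
    simp only [s', hi, show i < m by omega, dite_true]
    exact s_adj (Or.inl rfl)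
  · intro i j hij hj
    simp only [s', hj, show i < m by omega, dite_true]
    exact s_far (Or.inl hij)

def DM (m : ℕ) : PM m := Dd (s' m) m

lemma s'_fin {m : ℕ} (i : Fin m) : s' m i = s i := by simp [s']

lemma s_dvd_DM {m : ℕ} (i : Fin m) : s i ∣ DM m := by
  rw [← s'_fin]; exact t_dvd_Dd (brSeq m) m le_rfl i i.2

lemma s_DM {m : ℕ} (i : Fin m) : s i * DM m = DM m * s i.rev := by
  rw [← s'_fin, ← s'_fin, DM, Dd_flip (brSeq m) m le_rfl i i.2]
  congr 2
  simp [Fin.rev]; omega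

def ZM (m : ℕ) : PM m := DM m * DM m

lemma ZM_comm {m : ℕ} (a : PM m) : a * ZM m = ZM m * a := by
  induction a using PM.ind with
  | h1 => simp
  | hs i a ih =>
    rw [mul_assoc, ih, ← mul_assoc, ← mul_assoc]
    congr 1
    rw [ZM, ← mul_assoc, s_DM, mul_assoc, s_DM, Fin.rev_rev, mul_assoc]

lemma ZM_pow_comm {m : ℕ} (a b : PM m) (hb : b ∈ Submonoid.powers (ZM m)) : a * b = b * a := by
  obtain ⟨k, rfl⟩ := hb
  exact (Commute.pow_right (ZM_comm a) k)

instance oreZ (m : ℕ) : OreLocalization.OreSet (Submonoid.powers (ZM m)) where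
  ore_right_cancel r1 r2 z h := ⟨z, by
    rw [← ZM_pow_comm r1 z z.2, h, ZM_pow_comm r2 z z.2]⟩
  oreNum r _ := r
  oreDenom _ z := z
  ore_eq r z := (ZM_pow_comm r z z.2).symm

abbrev Loc (m : ℕ) := OreLocalization (Submonoid.powers (ZM m)) (PM m)

noncomputable def locHom (m : ℕ) : PM m →* Loc m := OreLocalization.numeratorHom

lemma locHom_inj (m : ℕ) : Function.Injective (locHom m) := by
  intro a b h
  rw [locHom, OreLocalization.numeratorHom_apply, OreLocalization.numeratorHom_apply,
    OreLocalization.oreDiv_eq_iff] at h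
  obtain ⟨u, v, h1, h2⟩ := h
  simp [Submonoid.smul_def] at h1 h2
  rw [← h2] at h1
  exact (PM.cancel _ h1).symm

lemma loc_unit {m : ℕ} (i : Fin m) : IsUnit (locHom m (s i)) := by
  have hZ : IsUnit (locHom m (ZM m)) :=
    OreLocalization.numerator_isUnit (⟨ZM m, Submonoid.mem_powers _⟩ : Submonoid.powers (ZM m))
  obtain ⟨v, hv⟩ := s_dvd_DM i
  have e1 : ZM m = s i * (v * DM m) := by rw [ZM, ← mul_assoc, ← hv]
  have e2 : ZM m = (v * DM m) * s i := by
    apply PM.cancel (s i)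
    rw [← mul_assoc, ← e1, ZM_comm]
  obtain ⟨z, hz⟩ := hZ
  have f1 : locHom m (s i) * (locHom m (v * DM m) * ↑z⁻¹) = 1 := by
    rw [← mul_assoc, ← map_mul, ← e1, ← hz]; simp
  have f2 : (↑z⁻¹ * locHom m (v * DM m)) * locHom m (s i) = 1 := by
    rw [mul_assoc, ← map_mul, ← e2, ← hz]; simp
  have f3 := left_inv_eq_right_inv f2 f1
  exact ⟨⟨_, _, f1, f3 ▸ f2⟩, rfl⟩

/-- The canonical map from the positive monoid to the braid group. -/
def io (n : ℕ) : PM (n - 1) →* Braid n :=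
  Con.lift _ (FreeMonoid.lift (σ (n := n))) (by
    refine Con.conGen_le.2 ?_
    intro a b h
    have key : ∀ r ∈ braidRels n, (PresentedGroup.mk (braidRels n) r) = 1 :=
      fun r hr => PresentedGroup.one_of_mem hr
    cases h with
    | br i j h =>
      have := key _ (Or.inl ⟨i, j, h, rfl⟩)
      rw [map_mul, map_inv, mul_inv_eq_one] at this
      simp only [map_mul, mul_assoc] at this
      simp only [Con.ker_rel, map_mul, FreeMonoid.lift_eval_of]
      exact this
    | far i j h =>
      have := key _ (Or.inr ⟨i, j, h, rfl⟩)
      rw [map_mul, map_inv, mul_inv_eq_one] at this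
      simp only [map_mul, mul_assoc] at this
      simp only [Con.ker_rel, map_mul, FreeMonoid.lift_eval_of]
      exact this)

lemma io_s {n : ℕ} (i : Fin (n - 1)) : io n (s i) = σ i := by
  show io n (pmk _ (.of i)) = σ i
  simp [io, pmk]

noncomputable def locU {m : ℕ} (i : Fin m) : (Loc m)ˣ := (loc_unit i).unit

noncomputable def braidLoc (n : ℕ) : Braid n →* (Loc (n - 1))ˣ :=
  PresentedGroup.toGroup (f := fun i => locU i) (by
    intro r hr
    rcases hr with ⟨i, j, h, rfl⟩ | ⟨i, j, h, rfl⟩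
    · rw [map_mul, map_inv, mul_inv_eq_one]
      ext
      simp only [map_mul, FreeGroup.lift_apply_of, locU, Units.val_mul, IsUnit.unit_spec]
      simp only [← map_mul, mul_assoc]
      rw [s_adj (Or.inl h)]
    · rw [map_mul, map_inv, mul_inv_eq_one]
      ext
      simp only [map_mul, FreeGroup.lift_apply_of, locU, Units.val_mul, IsUnit.unit_spec]
      simp only [← map_mul]
      rw [s_far (Or.inl h)])

lemma braidLoc_io {n : ℕ} (a : PM (n - 1)) : (braidLoc n (io n a) : Loc (n - 1)) = locHom _ a := by
  induction a using PM.ind with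
  | h1 => simp
  | hs i a ih =>
    rw [map_mul, map_mul, Units.val_mul, ih, map_mul, io_s]
    congr 1
    simp [braidLoc, σ, locU]

lemma io_inj (n : ℕ) : Function.Injective (io n) := by
  intro a b h
  apply locHom_inj
  rw [← braidLoc_io, ← braidLoc_io, h]

lemma io_pos {n : ℕ} (a : PM (n - 1)) : io n a ∈ Pos n := by
  induction a using PM.ind with
  | h1 => simp [one_mem]
  | hs i a ih =>
    rw [map_mul, io_s]
    exact mul_mem (Submonoid.subset_closure ⟨i, rfl⟩) ih

lemma pos_io {n : ℕ} {a : Braid n} (h : a ∈ Pos n) : ∃ b, io n b = a := by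
  have : Pos n ≤ MonoidHom.mrange (io n) := by
    refine Submonoid.closure_le.2 ?_
    rintro _ ⟨i, rfl⟩
    exact ⟨s i, io_s i⟩
  exact this h

lemma io_D (n : ℕ) : io n (DM (n - 1)) = Δ n := by
  have hs : ∀ i, io n (s' (n - 1) i) = σ' n i := by
    intro i
    by_cases h : i < n - 1 <;> simp [s', σ', h, io_s]
  rw [DM, ← Dd_eq, map_list_prod, List.map_map, Δ]
  congr 2
  funext i
  exact hs i

lemma prefix_io {n : ℕ} {a b : PM (n - 1)} : PrefixLE (io n a) (io n b) ↔ a ∣ b := by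
  constructor
  · intro h
    obtain ⟨c, hc⟩ := pos_io h
    refine ⟨c, io_inj n ?_⟩
    rw [map_mul, hc]; group
  · rintro ⟨c, rfl⟩
    simp [PrefixLE, io_pos]

lemma pos_antisymm {n : ℕ} {a : Braid n} (h : a ∈ Pos n) (h' : a⁻¹ ∈ Pos n) : a = 1 := by
  obtain ⟨b, rfl⟩ := pos_io h
  obtain ⟨c, hc⟩ := pos_io h'
  have : b * c = 1 := io_inj n (by rw [map_mul, hc]; simp)
  have := congrArg ln this
  rcases PM.cases b with rfl | ⟨i, b, rfl⟩
  · simp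
  · simp at this

lemma lcmG {n : ℕ} {y z a b : Braid n} (ha : a ∈ Pos n) (hb : b ∈ Pos n)
    (hay : PrefixLE a y) (hby : PrefixLE b y) (haz : PrefixLE a z) (hbz : PrefixLE b z) :
    ∃ c ∈ Pos n, PrefixLE a c ∧ PrefixLE b c ∧ PrefixLE c y ∧ PrefixLE c z := by
  have hy : y ∈ Pos n := by
    have := mul_mem ha hay; simpa using this
  have hz : z ∈ Pos n := by
    have := mul_mem ha haz; simpa using this
  obtain ⟨a, rfl⟩ := pos_io ha
  obtain ⟨b, rfl⟩ := pos_io hb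
  obtain ⟨y, rfl⟩ := pos_io hy
  obtain ⟨z, rfl⟩ := pos_io hz
  simp only [prefix_io] at *
  obtain ⟨c, h1, h2, h3, h4⟩ := PM.lcm (ln y) y z a b le_rfl hay hby haz hbz
  exact ⟨io n c, io_pos c, prefix_io.2 h1, prefix_io.2 h2, prefix_io.2 h3, prefix_io.2 h4⟩

lemma D_pos (n : ℕ) : Δ n ∈ Pos n := by rw [← io_D]; exact io_pos _

lemma σ_D {n : ℕ} (i : Fin (n - 1)) : σ i * Δ n = Δ n * σ i.rev := by
  rw [← io_D, ← io_s, ← io_s, ← map_mul, ← map_mul, s_DM]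

lemma conj1 {n : ℕ} {a : Braid n} (h : a ∈ Pos n) : (Δ n)⁻¹ * a * Δ n ∈ Pos n := by
  induction h using Submonoid.closure_induction with
  | mem x hx =>
    obtain ⟨i, rfl⟩ := hx
    rw [mul_assoc, σ_D, ← mul_assoc, inv_mul_cancel, one_mul]
    exact Submonoid.subset_closure ⟨_, rfl⟩
  | one => simp [one_mem]
  | mul x y _ _ hx hy =>
    have := mul_mem hx hy
    convert this using 1; group

lemma conj2 {n : ℕ} {a : Braid n} (h : a ∈ Pos n) : Δ n * a * (Δ n)⁻¹ ∈ Pos n := by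
  induction h using Submonoid.closure_induction with
  | mem x hx =>
    obtain ⟨i, rfl⟩ := hx
    have := σ_D i.rev
    rw [Fin.rev_rev] at this
    rw [← this, mul_assoc, mul_inv_cancel, mul_one]
    exact Submonoid.subset_closure ⟨_, rfl⟩
  | one => simp [one_mem]
  | mul x y _ _ hx hy =>
    have := mul_mem hx hy
    convert this using 1; group

lemma conjZ {n : ℕ} {a : Braid n} (h : a ∈ Pos n) (k : ℤ) : Δ n ^ k * a * Δ n ^ (-k) ∈ Pos n := by
  induction k using Int.induction_on with
  | zero => simpa using h
  | succ k ih => convert conj2 ih using 1; group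
  | pred k ih => convert conj1 ih using 1; group

lemma simple_D (n : ℕ) : IsSimple (Δ n) := ⟨D_pos n, by simp [PrefixLE, one_mem]⟩

lemma simple_conj {n : ℕ} {a : Braid n} (h : IsSimple a) (k : ℤ) :
    IsSimple (Δ n ^ k * a * Δ n ^ (-k)) := by
  refine ⟨conjZ h.1 k, ?_⟩
  have := conjZ h.2 k
  unfold PrefixLE
  convert this using 1; group

lemma simple_compl {n : ℕ} {a : Braid n} (h : IsSimple a) : IsSimple (a⁻¹ * Δ n) := by
  refine ⟨h.2, ?_⟩
  have := conj1 h.1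
  unfold PrefixLE
  convert this using 1; group

lemma prefix_head {n : ℕ} (l : List (Braid n)) : ∀ (x u : Braid n), (∀ a ∈ x :: l, IsSimple a) →
    List.IsChain LeftWeighted (x :: l) → IsSimple u → PrefixLE u (x * l.prod) → PrefixLE u x := by
  induction l with
  | nil => intro x u _ _ _ h; simpa using h
  | cons b l ih =>
    intro x u hs hc hu h
    have hx : IsSimple x := hs x (by simp)
    have hl : ∀ l : List (Braid n), (∀ a ∈ l, IsSimple a) → l.prod ∈ Pos n :=
      fun l hl => Submonoid.list_prod_mem _ fun a ha => (hl a ha).1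
    obtain ⟨c, hc0, hxc, huc, hcy, hcD⟩ := lcmG hx.1 hu.1
      (y := x * (b :: l).prod) (z := Δ n)
      (by
        have := hl (b :: l) (fun a ha => hs a (List.mem_cons_of_mem _ ha))
        simpa [PrefixLE] using this) h hx.2 hu.2
    have ht : IsSimple (x⁻¹ * c) := by
      refine ⟨hxc, ?_⟩
      have := mul_mem hcD (conj1 hx.1)
      unfold PrefixLE
      convert this using 1; group
    rw [List.isChain_cons_cons] at hc
    have htb : PrefixLE (x⁻¹ * c) b := by
      refine ih b _ (fun a ha => hs a (List.mem_cons_of_mem _ ha)) hc.2 ht ?_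
      unfold PrefixLE at hcy ⊢
      convert hcy using 1
      simp [mul_assoc]
    have h1 : x⁻¹ * c = 1 := by
      by_contra hne
      refine hc.1 _ hxc htb hne ?_
      rw [mul_inv_cancel_left]
      exact ⟨hc0, hcD⟩
    have : c = x := by rw [inv_mul_eq_one] at h1; exact h1.symm
    rwa [this] at huc

lemma nf_minimal {n : ℕ} (ys : List (Braid n)) : ∀ (u : Braid n) (zs : List (Braid n)),
    u ∈ Pos n → (∀ a ∈ ys, IsSimple a) → (∀ a ∈ zs, IsSimple a) →
    List.IsChain LeftWeighted zs → zs.getLast? ≠ some 1 → u * zs.prod = ys.prod →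
    zs.length ≤ ys.length := by
  induction ys with
  | nil =>
    intro u zs hu _ hz _ hlast h
    rcases List.eq_nil_or_concat zs with rfl | ⟨L, b, rfl⟩
    · simp
    · exfalso
      apply hlast
      have hb : b = 1 := by
        refine pos_antisymm (hz b (by simp)).1 ?_
        have hL : L.prod ∈ Pos n :=
          Submonoid.list_prod_mem _ fun a ha => (hz a (by simp [ha])).1
        have : b⁻¹ = u * L.prod := by
          rw [inv_eq_iff_mul_eq_one, mul_eq_one_iff_eq_inv, eq_comm, inv_eq_iff_mul_eq_one]
          simpa [mul_assoc] using h
        rw [this]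
        exact mul_mem hu hL
      simp [hb]
  | cons y ys ih =>
    intro u zs hu hy hz hc hlast h
    rcases zs with _ | ⟨z, zs⟩
    · simp
    have hys : ys.prod ∈ Pos n :=
      Submonoid.list_prod_mem _ fun a ha => (hy a (by simp [ha])).1
    have hzs : (z :: zs).prod ∈ Pos n :=
      Submonoid.list_prod_mem _ fun a ha => (hz a ha).1
    have hy0 := hy y (by simp)
    obtain ⟨c, hc0, huc, hyc, hcY, hcZ⟩ := lcmG hu hy0.1
      (y := u * (z :: zs).prod) (z := u * Δ n)
      (by unfold PrefixLE; rwa [inv_mul_cancel_left])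
      (by unfold PrefixLE; rw [h, List.prod_cons, inv_mul_cancel_left]; exact hys)
      (by unfold PrefixLE; rw [inv_mul_cancel_left]; exact D_pos n)
      (by
        have := mul_mem hy0.2 (conj1 hu)
        unfold PrefixLE
        convert this using 1; group)
    have ht : IsSimple (u⁻¹ * c) := by
      refine ⟨huc, ?_⟩
      unfold PrefixLE at hcZ ⊢
      convert hcZ using 1; group
    have htz : PrefixLE (u⁻¹ * c) z := by
      refine prefix_head zs z _ hz hc ht ?_
      unfold PrefixLE at hcY ⊢
      convert hcY using 1
      simp [mul_assoc]
    have := ih (y⁻¹ * c * ((u⁻¹ * c)⁻¹ * z)) zs (mul_mem hyc htz)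
      (fun a ha => hy a (by simp [ha])) (fun a ha => hz a (by simp [ha])) hc.tail
      (by
        rcases zs with _ | ⟨w, zs⟩
        · simp
        · simpa using hlast)
      (by
        have h' : ys.prod = y⁻¹ * (u * (z * zs.prod)) := by
          rw [← List.prod_cons, h]; simp
        rw [h']; group)
    simpa using this

lemma word_form {n : ℕ} (w : List (Braid n)) (hw : ∀ a ∈ w, SimpleOrInv a) :
    ∃ (t : ℕ) (ys : List (Braid n)), t ≤ w.length ∧ ys.length = w.length ∧
      (∀ a ∈ ys, IsSimple a) ∧ w.prod = Δ n ^ (-(t : ℤ)) * ys.prod := by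
  induction w with
  | nil => exact ⟨0, [], by simp⟩
  | cons a w ih =>
    obtain ⟨t, ys, h1, h2, h3, h4⟩ := ih (fun b hb => hw b (by simp [hb]))
    rcases hw a (by simp) with ha | ha
    · refine ⟨t, (Δ n ^ (t : ℤ) * a * Δ n ^ (-(t : ℤ))) :: ys, by simp; omega, by simp [h2], ?_, ?_⟩
      · intro b hb
        rcases List.mem_cons.1 hb with rfl | hb
        · exact simple_conj ha _
        · exact h3 b hb
      · rw [List.prod_cons, List.prod_cons, h4]; group
    · refine ⟨t + 1, (Δ n ^ ((t : ℤ) + 1) * (a⁻¹⁻¹ * Δ n ^ (-(t : ℤ)))) :: ys, by simp; omega,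
        by simp [h2], ?_, ?_⟩
      · intro b hb
        rcases List.mem_cons.1 hb with rfl | hb
        · convert simple_conj (simple_compl ha) ((t : ℤ) + 1) using 1
          group
        · exact h3 b hb
      · rw [List.prod_cons, List.prod_cons, h4]; push_cast; group

lemma upper_neg {n : ℕ} (l : List (Braid n)) (hl : ∀ a ∈ l, IsSimple a) : ∀ k : ℕ,
    ∃ w : List (Braid n), (∀ a ∈ w, SimpleOrInv a) ∧ w.prod = Δ n ^ (-(k : ℤ)) * l.prod ∧
      w.length = max k l.length := by
  induction l with
  | nil =>
    intro k
    refine ⟨List.replicate k (Δ n)⁻¹, ?_, by simp, by simp⟩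
    intro a ha
    rw [List.eq_of_mem_replicate ha]
    right; rw [inv_inv]; exact simple_D n
  | cons x l ih =>
    intro k
    rcases k with _ | k
    · exact ⟨x :: l, fun a ha => Or.inl (hl a ha), by simp, by simp⟩
    · obtain ⟨w, h1, h2, h3⟩ := ih (fun a ha => hl a (by simp [ha])) k
      refine ⟨(Δ n ^ (-(k : ℤ)) * ((Δ n)⁻¹ * x) * Δ n ^ (k : ℤ)) :: w, ?_, ?_, ?_⟩
      · intro b hb
        rcases List.mem_cons.1 hb with rfl | hb
        · right
          convert simple_conj (simple_compl (hl x (by simp))) (-(k : ℤ)) using 1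
          group
        · exact h1 b hb
      · rw [List.prod_cons, List.prod_cons, h2]; push_cast; group
      · simp [h3]

lemma len_le {n : ℕ} (w : List (Braid n)) (hw : ∀ a ∈ w, SimpleOrInv a) :
    len w.prod ≤ w.length := Nat.sInf_le ⟨w, hw, rfl, rfl⟩

lemma upper {n : ℕ} (x : Braid n) (p : ℤ) (l : List (Braid n)) (h : IsNormalForm x p l) :
    ∃ w : List (Braid n), (∀ a ∈ w, SimpleOrInv a) ∧ w.prod = x ∧
      (w.length : ℤ) = max |p| (max (l.length : ℤ) (p + l.length)) := by
  obtain ⟨hx, -, hs, -, -⟩ := h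
  rcases le_total 0 p with hp | hp
  · lift p to ℕ using hp
    refine ⟨List.replicate p (Δ n) ++ l, ?_, by simp [hx], ?_⟩
    · intro a ha
      rcases List.mem_append.1 ha with ha | ha
      · rw [List.eq_of_mem_replicate ha]; exact Or.inl (simple_D n)
      · exact Or.inl (hs a ha)
    · simp
  · obtain ⟨k, rfl⟩ : ∃ k : ℕ, p = -(k : ℤ) := ⟨p.natAbs, by omega⟩
    obtain ⟨w, h1, h2, h3⟩ := upper_neg l hs k
    refine ⟨w, h1, by rw [h2, hx], ?_⟩
    rw [h3]; simp only [abs_neg, Nat.abs_cast]; push_cast; omega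

lemma lower {n : ℕ} (x : Braid n) (p : ℤ) (l : List (Braid n)) (h : IsNormalForm x p l)
    (w : List (Braid n)) (hw : ∀ a ∈ w, SimpleOrInv a) (hwx : w.prod = x) :
    max |p| (max (l.length : ℤ) (p + l.length)) ≤ w.length := by
  obtain ⟨hx, ⟨-, hinf⟩, hs, hlast, hchain⟩ := h
  obtain ⟨t, ys, ht, hlen, hys, hprod⟩ := word_form w hw
  have hysP : ys.prod ∈ Pos n := Submonoid.list_prod_mem _ fun a ha => (hys a ha).1
  have hxy : x = Δ n ^ (-(t : ℤ)) * ys.prod := by rw [← hwx, hprod]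
  have hpt : -(t : ℤ) ≤ p := by
    by_contra hlt
    apply hinf
    obtain ⟨k, hk⟩ : ∃ k : ℕ, -(t : ℤ) = p + 1 + k := ⟨(-(t : ℤ) - (p + 1)).toNat, by omega⟩
    unfold PrefixLE
    rw [hxy, hk, zpow_add _ (p + 1), mul_assoc, inv_mul_cancel_left, zpow_natCast]
    exact mul_mem (pow_mem (D_pos n) k) hysP
  obtain ⟨q, hq⟩ : ∃ q : ℕ, p = -(t : ℤ) + q := ⟨(p + t).toNat, by omega⟩
  have hY : ys.prod = Δ n ^ q * l.prod := by
    rw [hx, hq, zpow_add, mul_assoc, zpow_natCast] at hxy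
    exact (mul_left_cancel hxy).symm
  have hD1 : Δ n ≠ 1 := by
    intro h1
    apply hinf
    unfold PrefixLE
    rw [hx, h1]
    simpa using Submonoid.list_prod_mem _ fun a ha => (hs a ha).1
  have hDw : ∀ b : Braid n, LeftWeighted (Δ n) b := by
    intro b u hu _ hne hsim
    apply hne
    refine pos_antisymm hu ?_
    have := hsim.2
    unfold PrefixLE at this
    simpa [mul_assoc] using this
  have key := nf_minimal ys 1 (List.replicate q (Δ n) ++ l) (one_mem _) hys
    (by
      intro a ha
      rcases List.mem_append.1 ha with ha | ha
      · rw [List.eq_of_mem_replicate ha]; exact simple_D n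
      · exact hs a ha)
    (by
      clear hq hY
      induction q with
      | zero => exact hchain
      | succ q ih =>
        rw [List.replicate_succ, List.cons_append, List.isChain_cons]
        exact ⟨fun b _ => hDw b, ih⟩)
    (by
      rcases List.eq_nil_or_concat l with rfl | ⟨L, b, rfl⟩
      · intro hh
        rw [List.append_nil] at hh
        have := List.mem_of_getLast? hh
        exact hD1 (List.eq_of_mem_replicate this).symm
      · simpa [← List.append_assoc] using hlast)
    (by simp [hY])
  simp at key
  rw [max_le_iff, max_le_iff, abs_le]
  omega

/-- **Lemma (Charney–Meier).** If `x = Δ^p x₁ ⋯ x_r` is the left normal form of `x ∈ B_n`,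
then `|x| = max(|p|, r, p + r)`; in particular `ℓ(x) ≤ |x|`. -/
theorem len_eq_max_of_normal_form (n : ℕ) (x : Braid n) (p : ℤ) (l : List (Braid n))
    (h : IsNormalForm x p l) :
    (len x : ℤ) = max |p| (max (l.length : ℤ) (p + l.length)) ∧ l.length ≤ len x := by
  obtain ⟨w, hw1, hw2, hw3⟩ := upper x p l h
  have hle : len x ≤ w.length := hw2 ▸ len_le w hw1
  obtain ⟨w', hw1', hw2', hw3'⟩ : len x ∈ {k | ∃ l : List (Braid n),
      (∀ a ∈ l, SimpleOrInv a) ∧ l.prod = x ∧ l.length = k} := Nat.sInf_mem ⟨_, w, hw1, hw2, rfl⟩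
  have hge := lower x p l h w' hw1' hw2'
  rw [hw3'] at hge
  have e : (len x : ℤ) = max |p| (max (l.length : ℤ) (p + l.length)) :=
    le_antisymm (by rw [← hw3]; exact_mod_cast hle) hge
  refine ⟨e, ?_⟩
  have : (l.length : ℤ) ≤ len x := by
    rw [e]; exact (le_max_left _ _).trans (le_max_right _ _)
  exact_mod_cast this

end Braids
end
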